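/- arXiv:math/0009238 — 2 statements merged into one kernel-verified Lean document; each statement's English description precedes it below -/
import Mathlib

section
/- Let β = 1, i.e. w(x) = exp(−x) is the Laguerre weight, and let λ_N be as in the context. Then lim_{N→∞} λ_N / [ 2^{7/2} π^{3/2} e N^{1/4} exp(−4√N) ] = 1; equivalently, 2π/λ_N ≃ 2^{−5/2} π^{−1/2} e^{−1} N^{−1/4} exp(4√N) as N → ∞. -/
open MeasureTheory Real Filter Topology

lemma sz_inv (n k N : ℕ) (hn : n ≤ N) :
    ∑ i ∈ Finset.range (N + 1), (-1 : ℝ) ^ (n + i) * (n.choose i : ℝ) * (i.choose k : ℝ)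
      = if n = k then 1 else 0 := by
  have h1 : ∑ i ∈ Finset.range (N + 1), (-1 : ℝ) ^ (n + i) * (n.choose i : ℝ) * (i.choose k : ℝ)
      = ∑ i ∈ Finset.range (n + 1), (-1 : ℝ) ^ (n + i) * (n.choose i : ℝ) * (i.choose k : ℝ) := by
    symm
    apply Finset.sum_subset
    · intro i hi; simp at hi ⊢; omega
    · intro i _ hi
      have : n < i := by simpa using hi
      simp [Nat.choose_eq_zero_of_lt this]
  rw [h1]
  by_cases hk : k ≤ n
  · obtain ⟨d, rfl⟩ := Nat.exists_eq_add_of_le hk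
    have h2 : ∑ i ∈ Finset.range (k + d + 1), (-1 : ℝ) ^ (k + d + i) * ((k+d).choose i : ℝ) * (i.choose k : ℝ)
       = ∑ i ∈ Finset.range (d + 1), (-1 : ℝ) ^ (k + d + (k + i)) * ((k+d).choose (k + i) : ℝ) * ((k+i).choose k : ℝ) := by
      rw [show k + d + 1 = k + (d + 1) by ring, Finset.sum_range_add, Finset.sum_eq_zero, zero_add]
      intro i hi
      simp [Nat.choose_eq_zero_of_lt (Finset.mem_range.1 hi)]
    have h3 : ∀ i ∈ Finset.range (d + 1), (-1 : ℝ) ^ (k + d + (k + i)) * ((k+d).choose (k + i) : ℝ) * ((k+i).choose k : ℝ)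
       = (-1 : ℝ) ^ d * ((k+d).choose k : ℝ) * (((-1 : ℤ) ^ i * (d.choose i : ℤ) : ℤ) : ℝ) := by
      intro i _
      have := Nat.choose_mul (n := k + d) (k := k + i) (s := k) (by omega)
      have h4 : ((k+d).choose (k + i) : ℝ) * ((k+i).choose k : ℝ) = ((k+d).choose k : ℝ) * (d.choose i : ℝ) := by
        rw [show k + d - k = d by omega, show k + i - k = i by omega] at this
        exact_mod_cast this
      rw [mul_assoc, h4]
      push_cast
      rw [show k + d + (k + i) = 2 * k + (d + i) by ring, pow_add, pow_mul, pow_add]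
      simp
      ring
    rw [h2, Finset.sum_congr rfl h3, ← Finset.mul_sum, ← Int.cast_sum, Int.alternating_sum_range_choose]
    by_cases hd : d = 0
    · simp [hd]
    · simp [hd]
  · rw [Finset.sum_eq_zero, if_neg (by omega)]
    intro i hi
    have : i < k := by simp at hi; omega
    simp [Nat.choose_eq_zero_of_lt this]

lemma sz_chol (j k N : ℕ) (hj : j ≤ N) :
    ((j + k).factorial : ℝ) = ∑ i ∈ Finset.range (N + 1),
      ((j.factorial : ℝ) * (j.choose i : ℝ)) * ((k.factorial : ℝ) * (k.choose i : ℝ)) := by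
  have h0 : ((j + k).choose k) = ∑ i ∈ Finset.range (N + 1), j.choose i * k.choose i := by
    have h1 : ∑ i ∈ Finset.range (N + 1), j.choose i * k.choose i
       = ∑ i ∈ Finset.range (j + 1), j.choose i * k.choose i := by
      symm
      apply Finset.sum_subset
      · intro i hi; simp at hi ⊢; omega
      · intro i _ hi
        have : j < i := by simpa using hi
        simp [Nat.choose_eq_zero_of_lt this]
    have h2 : ∑ i ∈ Finset.range (k + 1), j.choose i * k.choose i
       = ∑ i ∈ Finset.range (max j k + 1), j.choose i * k.choose i := by
      apply Finset.sum_subset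
      · intro i hi; simp at hi ⊢; omega
      · intro i _ hi
        have : k < i := by simpa using hi
        simp [Nat.choose_eq_zero_of_lt this]
    have h3 : ∑ i ∈ Finset.range (j + 1), j.choose i * k.choose i
       = ∑ i ∈ Finset.range (max j k + 1), j.choose i * k.choose i := by
      apply Finset.sum_subset
      · intro i hi; simp at hi ⊢; omega
      · intro i _ hi
        have : j < i := by simpa using hi
        simp [Nat.choose_eq_zero_of_lt this]
    rw [h1, h3, ← h2, Nat.add_choose_eq, Finset.Nat.sum_antidiagonal_eq_sum_range_succ_mk]
    apply Finset.sum_congr rfl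
    intro i hi
    have : i ≤ k := by simp at hi; omega
    simp only [Nat.choose_symm this]
  have h5 : (j + k).factorial = j.factorial * k.factorial * (j + k).choose k := by
    have := Nat.add_choose_mul_factorial_mul_factorial j k
    rw [← this]; ring
  rw [h5, h0]
  push_cast
  rw [Finset.mul_sum]
  apply Finset.sum_congr rfl
  intro i _
  ring

noncomputable def szL (N : ℕ) : Matrix (Fin (N + 1)) (Fin (N + 1)) ℝ :=
  fun j i => ((j : ℕ).factorial : ℝ) * ((j : ℕ).choose i : ℝ)

noncomputable def szP (N : ℕ) : Matrix (Fin (N + 1)) (Fin (N + 1)) ℝ :=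
  fun n j => (-1 : ℝ) ^ ((n : ℕ) + (j : ℕ)) * ((n : ℕ).choose j : ℝ) / ((j : ℕ).factorial : ℝ)

lemma szPL (N : ℕ) : szP N * szL N = 1 := by
  ext n k
  rw [Matrix.mul_apply, Matrix.one_apply]
  have := sz_inv n k N (by omega)
  rw [← Fin.sum_univ_eq_sum_range (fun i => (-1 : ℝ) ^ ((n:ℕ) + i) * ((n:ℕ).choose i : ℝ) * (i.choose k : ℝ))] at this
  simp only [Fin.ext_iff]
  rw [← this]
  apply Finset.sum_congr rfl
  intro i _
  simp only [szP, szL]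
  field_simp

lemma szLLt (N : ℕ) (j k : Fin (N + 1)) : (szL N * (szL N).transpose) j k = (((j : ℕ) + k).factorial : ℝ) := by
  rw [Matrix.mul_apply, sz_chol j k N (by omega), ← Fin.sum_univ_eq_sum_range (fun i => (((j:ℕ).factorial : ℝ) * ((j:ℕ).choose i : ℝ)) * (((k:ℕ).factorial : ℝ) * ((k:ℕ).choose i : ℝ)))]
  rfl

noncomputable def szA (n : ℕ) : ℝ := ∑ j ∈ Finset.range (n + 1), ((n.choose j : ℝ) / (j.factorial : ℝ)) ^ 2

noncomputable def szG (N n : ℕ) : ℝ := ∑ j ∈ Finset.range (n + 1), ((n.choose j : ℝ) / (j.factorial : ℝ)) * ((N : ℝ) ^ j / (j.factorial : ℝ) ^ 2)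

noncomputable def szV (N : ℕ) : ℝ := ∑ j ∈ Finset.range (N + 1), ((N : ℝ) ^ j / (j.factorial : ℝ) ^ 2) ^ 2

lemma sz_mu (k : ℕ) : ∫ x in Set.Ioi (0:ℝ), x ^ k * Real.exp (-x) = (k.factorial : ℝ) := by
  rw [← Real.Gamma_nat_eq_factorial, Real.Gamma_eq_integral (by positivity)]
  apply setIntegral_congr_fun measurableSet_Ioi
  intro x _
  simp [mul_comm]

lemma sz_sum_ext (N n : ℕ) (hn : n ≤ N) (f : ℕ → ℝ) (hf : ∀ j, n < j → f j = 0) :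
    ∑ j : Fin (N + 1), f j = ∑ j ∈ Finset.range (n + 1), f j := by
  rw [Fin.sum_univ_eq_sum_range f]
  symm
  apply Finset.sum_subset
  · intro i hi; simp at hi ⊢; omega
  · intro i _ hi
    exact hf i (by simpa using hi)

lemma sz_upper (N : ℕ) (lam : ℝ)
    (h : Module.End.HasEigenvalue (Matrix.toLin' (szL N * (szL N).transpose)) lam) :
    1 ≤ lam * ∑ n ∈ Finset.range (N + 1), szA n := by
  obtain ⟨u, hu⟩ := h.exists_hasEigenvector
  have hne := hu.2
  have heq : (szL N * (szL N).transpose).mulVec u = lam • u := by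
    have := hu.apply_eq_smul
    simpa using this
  have hPL := szPL N
  have hLP : szL N * szP N = 1 := mul_eq_one_comm.1 hPL
  set y := (szP N).mulVec u with hy
  have huy : u = (szL N).mulVec y := by rw [hy, Matrix.mulVec_mulVec, hLP, Matrix.one_mulVec]
  have h1 : (szL N).transpose.mulVec u = lam • y := by
    have : (szP N).mulVec ((szL N * (szL N).transpose).mulVec u) = (szP N).mulVec (lam • u) := by rw [heq]
    rwa [Matrix.mulVec_mulVec, ← mul_assoc, hPL, one_mul, Matrix.mulVec_smul] at this
  have h2 : u ⬝ᵥ u = lam * (y ⬝ᵥ y) := by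
    conv_lhs => rw [huy]
    rw [← huy, huy, ← huy]
    calc u ⬝ᵥ u = u ⬝ᵥ (szL N).mulVec y := by rw [← huy]
      _ = (szL N).transpose.mulVec u ⬝ᵥ y := by
          rw [Matrix.dotProduct_mulVec, Matrix.mulVec_transpose]
      _ = _ := by rw [h1, smul_dotProduct, smul_eq_mul]
  have hpos : 0 < u ⬝ᵥ u := by
    rcases (lt_or_eq_of_le (show 0 ≤ u ⬝ᵥ u from Finset.sum_nonneg fun i _ => mul_self_nonneg _)) with h | h
    · exact h
    · exact absurd (dotProduct_self_eq_zero.1 h.symm) hne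
  have hyy : 0 ≤ y ⬝ᵥ y := Finset.sum_nonneg fun i _ => mul_self_nonneg _
  have hlam : 0 < lam := by
    by_contra hc
    push Not at hc
    nlinarith [mul_nonneg (neg_nonneg.2 hc) hyy]
  have h3 : y ⬝ᵥ y ≤ (∑ n ∈ Finset.range (N + 1), szA n) * (u ⬝ᵥ u) := by
    rw [← Fin.sum_univ_eq_sum_range, Finset.sum_mul]
    apply Finset.sum_le_sum
    intro n _
    have : szA n = ∑ j, (szP N n j) ^ 2 := by
      rw [szA, ← sz_sum_ext N n (by omega)]
      · apply Finset.sum_congr rfl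
        intro j _
        simp only [szP]
        rw [mul_div_assoc, mul_pow, ← pow_mul, mul_comm _ 2, pow_mul]
        simp
      · intro j hj
        simp [Nat.choose_eq_zero_of_lt hj]
    rw [this]
    have := Finset.sum_mul_sq_le_sq_mul_sq Finset.univ (fun j => szP N n j) u
    calc y n * y n = (∑ j, szP N n j * u j) ^ 2 := by rw [hy, sq]; rfl
      _ ≤ _ := this
      _ = _ := by congr 1; apply Finset.sum_congr rfl; intro i _; ring
  have h4 : u ⬝ᵥ u ≤ (lam * (∑ n ∈ Finset.range (N + 1), szA n)) * (u ⬝ᵥ u) := by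
    calc u ⬝ᵥ u = lam * (y ⬝ᵥ y) := h2
      _ ≤ lam * ((∑ n ∈ Finset.range (N + 1), szA n) * (u ⬝ᵥ u)) := by gcongr
      _ = _ := by ring
  by_contra hc
  push Not at hc
  nlinarith

lemma sz_lower (N : ℕ) (lam : ℝ) (hl : 0 ≤ lam)
    (h : ∀ x, Module.End.HasEigenvalue (Matrix.toLin' (szL N * (szL N).transpose)) x → lam ≤ x) :
    lam * ∑ n ∈ Finset.range (N + 1), (szG N n) ^ 2 ≤ szV N := by
  have hPL := szPL N
  have hLP : szL N * szP N = 1 := mul_eq_one_comm.1 hPL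
  set H := szL N * (szL N).transpose with hH
  have hHerm : H.IsHermitian := by
    have := Matrix.isHermitian_mul_conjTranspose_self (szL N)
    rwa [Matrix.conjTranspose_eq_transpose_of_trivial] at this
  have hHerm2 : (H - lam • (1 : Matrix _ _ ℝ)).IsHermitian := by
    apply hHerm.sub
    rw [Matrix.IsHermitian, Matrix.conjTranspose_smul]; simp
  have hPSD : (H - lam • (1 : Matrix _ _ ℝ)).PosSemidef := by
    rw [hHerm2.posSemidef_iff_eigenvalues_nonneg]
    intro i
    have h1 := hHerm2.mulVec_eigenvectorBasis i
    have hne : (hHerm2.eigenvectorBasis i).ofLp ≠ 0 := by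
      intro h0
      have h5 := hHerm2.eigenvectorBasis.orthonormal.ne_zero i
      apply h5
      ext k
      exact congrFun h0 k
    rw [Matrix.sub_mulVec, Matrix.smul_mulVec, Matrix.one_mulVec, sub_eq_iff_eq_add, ← add_smul] at h1
    have h2 := h _ (Module.End.hasEigenvalue_of_hasEigenvector
      (f := Matrix.toLin' H) (μ := hHerm2.eigenvalues i + lam) (x := (hHerm2.eigenvectorBasis i).ofLp)
      ⟨Module.End.mem_eigenspace_iff.2 (by rw [Matrix.toLin'_apply]; exact h1), hne⟩)
    simpa using h2
  have hR : ∀ q : Fin (N + 1) → ℝ, lam * ((szP N).transpose.mulVec q ⬝ᵥ (szP N).transpose.mulVec q) ≤ q ⬝ᵥ q := by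
    intro q
    set z := (szP N).transpose.mulVec q with hz
    have h1 := hPSD.dotProduct_mulVec_nonneg z
    rw [Matrix.sub_mulVec, Matrix.smul_mulVec, Matrix.one_mulVec, dotProduct_sub, dotProduct_smul] at h1
    have h2 : (szL N).transpose.mulVec z = q := by
      rw [hz, Matrix.mulVec_mulVec, ← Matrix.transpose_mul, hPL, Matrix.transpose_one, Matrix.one_mulVec]
    have h3 : z ⬝ᵥ H.mulVec z = q ⬝ᵥ q := by
      rw [hH, ← Matrix.mulVec_mulVec, h2, Matrix.dotProduct_mulVec, ← Matrix.mulVec_transpose, h2]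
    simp only [star_trivial, smul_eq_mul] at h1
    rw [h3] at h1
    linarith
  let v : Fin (N + 1) → ℝ := fun j => (-1 : ℝ) ^ (j : ℕ) * ((N : ℝ) ^ (j : ℕ) / ((j : ℕ).factorial : ℝ) ^ 2)
  set q := (szP N).mulVec v with hq
  have hqn : ∀ n, q n * q n = szG N n ^ 2 := by
    intro n
    have : q n = (-1 : ℝ) ^ (n : ℕ) * szG N n := by
      rw [szG, ← sz_sum_ext N n (by omega), Finset.mul_sum]
      · change ∑ j, szP N n j * v j = _
        apply Finset.sum_congr rfl
        intro j _
        simp only [szP, v]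
        have h6 : (-1 : ℝ) ^ (j : ℕ) * (-1 : ℝ) ^ (j : ℕ) = 1 := by
          rw [← mul_pow]; simp
        rw [pow_add]
        linear_combination ((-1 : ℝ) ^ (n : ℕ) * (((n : ℕ).choose j : ℝ) / ((j : ℕ).factorial : ℝ)) * ((N : ℝ) ^ (j : ℕ) / ((j : ℕ).factorial : ℝ) ^ 2)) * h6
      · intro j hj
        simp [Nat.choose_eq_zero_of_lt hj]
    have h6 : (-1 : ℝ) ^ (n : ℕ) * (-1 : ℝ) ^ (n : ℕ) = 1 := by
      rw [← mul_pow]; simp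
    rw [this]
    linear_combination (szG N n ^ 2) * h6
  have hqq : q ⬝ᵥ q = ∑ n ∈ Finset.range (N + 1), (szG N n) ^ 2 := by
    rw [← Fin.sum_univ_eq_sum_range (fun n => szG N n ^ 2)]
    exact Finset.sum_congr rfl fun n _ => hqn n
  have hvv : v ⬝ᵥ v = szV N := by
    rw [szV, ← Fin.sum_univ_eq_sum_range (fun j => ((N : ℝ) ^ j / (j.factorial : ℝ) ^ 2) ^ 2)]
    apply Finset.sum_congr rfl
    intro j _
    have h6 : (-1 : ℝ) ^ (j : ℕ) * (-1 : ℝ) ^ (j : ℕ) = 1 := by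
      rw [← mul_pow]; simp
    simp only [v]
    linear_combination (((N : ℝ) ^ (j : ℕ) / ((j : ℕ).factorial : ℝ) ^ 2) ^ 2) * h6
  set w := (szP N).transpose.mulVec q with hw
  have hqw : q ⬝ᵥ q = w ⬝ᵥ v := by
    conv_lhs => rhs; rw [hq]
    rw [Matrix.dotProduct_mulVec, hw, Matrix.mulVec_transpose]
  have hcs : (w ⬝ᵥ v) ^ 2 ≤ (w ⬝ᵥ w) * (v ⬝ᵥ v) := by
    have := Finset.sum_mul_sq_le_sq_mul_sq Finset.univ w v
    simpa [dotProduct, sq] using this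
  have hRq := hR q
  rw [← hw] at hRq
  rw [← hqq, ← hvv]
  have hvv0 : 0 ≤ v ⬝ᵥ v := Finset.sum_nonneg fun i _ => mul_self_nonneg _
  have hqq0 : 0 ≤ q ⬝ᵥ q := Finset.sum_nonneg fun i _ => mul_self_nonneg _
  rcases eq_or_lt_of_le hqq0 with h0 | h0
  · rw [← h0]; simpa using hvv0
  rw [← hqw] at hcs
  have : (lam * (q ⬝ᵥ q)) * (q ⬝ᵥ q) ≤ (v ⬝ᵥ v) * (q ⬝ᵥ q) := by
    calc (lam * (q ⬝ᵥ q)) * (q ⬝ᵥ q) = lam * (q ⬝ᵥ q) ^ 2 := by ring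
      _ ≤ lam * ((w ⬝ᵥ w) * (v ⬝ᵥ v)) := by gcongr
      _ = (lam * (w ⬝ᵥ w)) * (v ⬝ᵥ v) := by ring
      _ ≤ (q ⬝ᵥ q) * (v ⬝ᵥ v) := by gcongr
      _ = _ := by ring
  exact le_of_mul_le_mul_right this h0

noncomputable def szp (x : ℝ) (j : ℕ) : ℝ := Real.exp (-x) * x ^ j / (j.factorial : ℝ)

lemma szp_nonneg {x : ℝ} (hx : 0 ≤ x) (j : ℕ) : 0 ≤ szp x j := by unfold szp; positivity

lemma szp_bound0 {x : ℝ} (hx : 0 < x) (j : ℕ) (hj : j ≠ 0) :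
    Real.exp (-x) * x ^ j / (j / Real.exp 1) ^ j ≤ Real.exp (-(√j - √x) ^ 2) := by
  have hj' : (0 : ℝ) < j := by positivity
  have h1 : Real.exp (-x) * x ^ j / (j / Real.exp 1) ^ j = Real.exp (-x + j * Real.log (x / j) + j) := by
    rw [Real.exp_add, Real.exp_add, mul_comm (j : ℝ), Real.exp_mul, Real.exp_log (by positivity),
      Real.rpow_natCast, div_pow, div_pow, ← Real.exp_nat_mul]
    field_simp
  rw [h1]
  apply Real.exp_le_exp.2
  have h2 : Real.log (x / j) = 2 * Real.log (√x / √j) := by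
    rw [← Real.sqrt_div hx.le, Real.log_sqrt (by positivity)]; ring
  have h3 : Real.log (√x / √j) ≤ √x / √j - 1 := Real.log_le_sub_one_of_pos (by positivity)
  have h4 : (j : ℝ) * (√x / √j) = √x * √j := by
    have : (0:ℝ) < √j := by positivity
    field_simp
    rw [Real.sq_sqrt hj'.le]
  have h5 : (j : ℝ) * Real.log (x / j) ≤ 2 * (√x * √j) - 2 * j := by
    rw [h2, ← h4]; nlinarith
  have h6 := Real.sq_sqrt hx.le
  have h7 := Real.sq_sqrt hj'.le
  nlinarith

lemma szp_bound1 {x : ℝ} (hx : 1 ≤ x) (j : ℕ) :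
    √x * szp x j ≤ 2 * Real.exp (-(√j - √x) ^ 2 / 2) := by
  have hx0 : 0 < x := by linarith
  have hd : ∀ d : ℝ, d ≤ Real.exp (d ^ 2 / 2) := fun d => by
    have := Real.add_one_le_exp (d ^ 2 / 2)
    nlinarith [sq_nonneg (d - 1)]
  have hsx : 0 < √x := by positivity
  set d := √x - √j with hdd
  have hde : (√j - √x) ^ 2 = d ^ 2 := by rw [hdd]; ring
  rw [hde]
  -- basic bound
  by_cases h4 : 4 * (j : ℝ) < x
  · have hb : szp x j ≤ Real.exp (-d ^ 2) := by
      rcases Nat.eq_zero_or_pos j with rfl | hj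
      · simp [szp, hdd, Real.sq_sqrt hx0.le]
      · have hj' : (0:ℝ) < j := by positivity
        have hf := Stirling.le_factorial_stirling j
        have h1 : (1 : ℝ) ≤ √(2 * π * j) := by
          rw [Real.one_le_sqrt]
          have : (1 : ℝ) ≤ j := by exact_mod_cast hj
          nlinarith [Real.pi_gt_three]
        have hp : 0 < ((j:ℝ) / Real.exp 1) ^ j := by positivity
        have hf2 : ((j:ℝ) / Real.exp 1) ^ j ≤ j.factorial := by nlinarith
        rw [← hde]
        refine le_trans ?_ (szp_bound0 hx0 j (by omega))
        unfold szp
        gcongr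
    have hdx : √x ≤ 2 * d := by
      have : 2 * √j ≤ √x := by
        rw [show (2:ℝ) = √4 by rw [show (4:ℝ) = 2 ^ 2 by norm_num, Real.sqrt_sq (by norm_num)], ← Real.sqrt_mul (by norm_num)]
        exact Real.sqrt_le_sqrt h4.le
      rw [hdd]; linarith
    calc √x * szp x j ≤ (2 * Real.exp (d ^ 2 / 2)) * Real.exp (-d ^ 2) := by
          apply mul_le_mul (hdx.trans _) hb (szp_nonneg hx0.le j) (by positivity)
          linarith [hd d]
      _ = _ := by rw [mul_assoc, ← Real.exp_add]; congr 2; ring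
  · push Not at h4
    have hj : j ≠ 0 := by
      rintro rfl
      simp at h4; linarith
    have hj' : (0:ℝ) < j := by positivity
    have hf := Stirling.le_factorial_stirling j
    have hb := szp_bound0 hx0 j hj
    have hs : √x ≤ 2 * √(2 * π * j) := by
      rw [show (2:ℝ) * √(2 * π * j) = √4 * √(2 * π * j) by rw [show (4:ℝ) = 2 ^ 2 by norm_num, Real.sqrt_sq (by norm_num)], ← Real.sqrt_mul (by norm_num)]
      apply Real.sqrt_le_sqrt
      nlinarith [Real.pi_gt_three]
    have hp : 0 < ((j:ℝ) / Real.exp 1) ^ j := by positivity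
    have hsj : 0 < √(2 * π * j) := by positivity
    have h1 : szp x j ≤ Real.exp (-d ^ 2) / √(2 * π * j) := by
      rw [le_div_iff₀ hsj]
      rw [← hde]
      refine le_trans ?_ hb
      unfold szp
      rw [le_div_iff₀ hp]
      have h2 : Real.exp (-x) * x ^ j / j.factorial * j.factorial = Real.exp (-x) * x ^ j := by field_simp
      rw [mul_assoc]
      calc Real.exp (-x) * x ^ j / j.factorial * (√(2 * π * j) * ((j:ℝ) / Real.exp 1) ^ j)
          ≤ Real.exp (-x) * x ^ j / j.factorial * j.factorial := by gcongr
        _ = _ := h2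
    calc √x * szp x j ≤ (2 * √(2 * π * j)) * (Real.exp (-d ^ 2) / √(2 * π * j)) := by
          apply mul_le_mul hs h1 (szp_nonneg hx0.le j) (by positivity)
      _ = 2 * Real.exp (-d ^ 2) := by field_simp
      _ ≤ _ := by
          gcongr
          nlinarith [sq_nonneg d]

lemma szp_bound2 {x s : ℝ} (hx : 1 ≤ x) (hs : 0 ≤ x + s * √x) :
    (√x * szp x ⌊x + s * √x⌋₊) ^ 4 ≤ 16 * Real.exp 2 * Real.exp (-|s|) := by
  have hx0 : 0 < x := by linarith
  set j := ⌊x + s * √x⌋₊ with hj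
  set d := |√j - √x| with hd
  have hd0 : 0 ≤ d := abs_nonneg _
  have hsx : 1 ≤ √x := by rwa [Real.one_le_sqrt]
  have h1 := szp_bound1 hx j
  have h2 : (√j - √x) ^ 2 = d ^ 2 := by rw [hd, sq_abs]
  have hjl : (j : ℝ) ≤ x + s * √x := Nat.floor_le hs
  have hju : x + s * √x < j + 1 := Nat.lt_floor_add_one _
  have h3 : |(j : ℝ) - x| ≤ d * (2 * √x + d) := by
    have e : (j : ℝ) - x = (√j - √x) * (√j + √x) := by
      have h6 := Real.sq_sqrt hx0.le
      have h7 := Real.sq_sqrt (Nat.cast_nonneg (α := ℝ) j)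
      nlinarith
    rw [e, abs_mul, ← hd, abs_of_nonneg (by positivity)]
    have h8 : √j - √x ≤ d := le_abs_self (√j - √x)
    exact mul_le_mul_of_nonneg_left (by linarith) hd0
  have h4 : |s| * √x ≤ |(j : ℝ) - x| + 1 := by
    have h9 : |s| * √x = |s * √x| := by rw [abs_mul, abs_of_pos (show 0 < √x by linarith)]
    rw [h9, abs_le]
    constructor
    · linarith [neg_abs_le ((j:ℝ) - x)]
    · linarith [le_abs_self ((j:ℝ) - x)]
  have h5 : |s| ≤ 2 * d ^ 2 + 2 := by
    have : |s| * √x ≤ (2 * d ^ 2 + 2) * √x := by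
      nlinarith [mul_nonneg hd0 hd0, sq_nonneg (d - 1), mul_nonneg (sq_nonneg (d-1)) (by linarith : 0 ≤ √x), mul_nonneg (sq_nonneg d) (by linarith : 0 ≤ √x - 1)]
    exact le_of_mul_le_mul_right this (by linarith)
  rw [h2] at h1
  calc (√x * szp x j) ^ 4 ≤ (2 * Real.exp (-d ^ 2 / 2)) ^ 4 := by
        apply pow_le_pow_left₀ _ h1
        have := szp_nonneg hx0.le j
        positivity
    _ = 16 * Real.exp (-2 * d ^ 2) := by
        rw [mul_pow, ← Real.exp_nat_mul]; norm_num; ring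
    _ ≤ 16 * Real.exp (2 + -|s|) := by
        gcongr
        linarith
    _ = _ := by rw [Real.exp_add]; ring

lemma sz_h_lim {α : Type*} {l : Filter α} {x u : α → ℝ} {s : ℝ}
    (hx : Tendsto x l atTop) (hu : Tendsto u l (𝓝 0))
    (hxu : Tendsto (fun a => √(x a) * u a) l (𝓝 s)) :
    Tendsto (fun a => x a * ((1 + u a) * Real.log (1 + u a) - u a)) l (𝓝 (s ^ 2 / 2)) := by
  have hxu2 : Tendsto (fun a => x a * u a ^ 2) l (𝓝 (s ^ 2)) := by
    refine (hxu.pow 2).congr' ?_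
    filter_upwards [hx.eventually_ge_atTop 0] with a ha
    rw [mul_pow, Real.sq_sqrt ha]
  have hmain : Tendsto (fun a => x a * ((1 + u a) * Real.log (1 + u a) - u a) - x a * u a ^ 2 / 2) l (𝓝 0) := by
    have hb : Tendsto (fun a => x a * u a ^ 2 * (4 * |u a|)) l (𝓝 0) := by
      have := hxu2.mul ((hu.abs).const_mul 4)
      simpa using this
    apply squeeze_zero_norm' _ hb
    have hu2 : ∀ᶠ a in l, |u a| < 1 / 2 := by
      have := (hu.abs).eventually (gt_mem_nhds (show |(0:ℝ)| < 1 / 2 by simp))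
      exact this
    filter_upwards [hx.eventually_ge_atTop 0, hu2] with a ha hua
    have h1 := Real.abs_log_sub_add_sum_range_le (x := - u a) (by rw [abs_neg]; linarith) 2
    rw [abs_neg, Finset.sum_range_succ, Finset.sum_range_one] at h1
    set R := Real.log (1 + u a) - u a + u a ^ 2 / 2 with hR
    have h2 : |R| ≤ 2 * |u a| ^ 3 := by
      have e : R = (-u a) ^ (0 + 1) / (((0:ℕ):ℝ) + 1) + (-u a) ^ (1 + 1) / (((1:ℕ):ℝ) + 1) + Real.log (1 - -u a) := by
        rw [hR]; push_cast; rw [sub_neg_eq_add]; ring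
      rw [e]
      refine h1.trans ?_
      rw [div_le_iff₀ (by linarith)]
      have : 0 ≤ |u a| ^ 3 := by positivity
      norm_num
      nlinarith [mul_nonneg this (by linarith : 0 ≤ 1 - 2*|u a|)]
    have h3 : (1 + u a) * Real.log (1 + u a) - u a - u a ^ 2 / 2 = - u a ^ 3 / 2 + (1 + u a) * R := by
      rw [hR]; ring
    have h4 : |- u a ^ 3 / 2 + (1 + u a) * R| ≤ 4 * |u a| ^ 3 := by
      have h5 : |1 + u a| ≤ 3 / 2 := by
        rw [abs_le] ; rw [abs_lt] at hua; constructor <;> linarith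
      calc |- u a ^ 3 / 2 + (1 + u a) * R| ≤ |- u a ^ 3 / 2| + |(1 + u a) * R| := abs_add_le _ _
        _ = |u a| ^ 3 / 2 + |1 + u a| * |R| := by rw [abs_mul, abs_div, abs_neg, abs_pow]; norm_num
        _ ≤ |u a| ^ 3 / 2 + 3 / 2 * (2 * |u a| ^ 3) := by gcongr
        _ ≤ _ := by
          have : 0 ≤ |u a| ^ 3 := by positivity
          linarith
    rw [Real.norm_eq_abs, show x a * ((1 + u a) * Real.log (1 + u a) - u a) - x a * u a ^ 2 / 2 = x a * ((1 + u a) * Real.log (1 + u a) - u a - u a ^ 2 / 2) by ring, h3, abs_mul, abs_of_nonneg ha]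
    calc x a * |- u a ^ 3 / 2 + (1 + u a) * R| ≤ x a * (4 * |u a| ^ 3) := by gcongr
      _ = _ := by rw [← sq_abs (u a)]; ring
  have := hmain.add (hxu2.div_const 2)
  simpa using this

lemma sz_floor_lim (s : ℝ) : Tendsto (fun x : ℝ => ((⌊x + s * √x⌋₊ : ℝ) - x) / √x) atTop (𝓝 s) := by
  have hsq : Tendsto (fun x : ℝ => √x) atTop atTop := Real.tendsto_sqrt_atTop
  have h0 : Tendsto (fun x : ℝ => s - (√x)⁻¹) atTop (𝓝 s) := by
    simpa using tendsto_const_nhds.sub hsq.inv_tendsto_atTop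
  apply tendsto_of_tendsto_of_tendsto_of_le_of_le' h0 tendsto_const_nhds
  · filter_upwards [eventually_gt_atTop (max 0 (s ^ 2))] with x hx
    have hx0 : 0 < x := lt_of_le_of_lt (le_max_left _ _) hx
    have hsx : 0 < √x := by positivity
    have := Nat.lt_floor_add_one (x + s * √x)
    rw [le_div_iff₀ hsx, sub_mul, inv_mul_cancel₀ hsx.ne']
    linarith
  · filter_upwards [eventually_gt_atTop (max 0 (s ^ 2))] with x hx
    have hx0 : 0 < x := lt_of_le_of_lt (le_max_left _ _) hx
    have hx1 : s ^ 2 < x := lt_of_le_of_lt (le_max_right _ _) hx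
    have hsx : 0 < √x := by positivity
    have h2 : |s| < √x := Real.lt_sqrt_of_sq_lt (by rwa [sq_abs])
    have h3 : 0 ≤ x + s * √x := by
      have := Real.sq_sqrt hx0.le
      nlinarith [neg_abs_le s]
    have := Nat.floor_le h3
    rw [div_le_iff₀ hsx]
    linarith

lemma sz_floor_lim1 (s : ℝ) : Tendsto (fun x : ℝ => ((⌊x + s * √x⌋₊ : ℝ) - x) / x) atTop (𝓝 0) := by
  have hsq : Tendsto (fun x : ℝ => √x) atTop atTop := Real.tendsto_sqrt_atTop
  have := (sz_floor_lim s).mul hsq.inv_tendsto_atTop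
  rw [mul_zero] at this
  refine this.congr' ?_
  filter_upwards [eventually_gt_atTop 0] with x hx
  have hsx : 0 < √x := by positivity
  simp only [Pi.inv_apply]
  rw [div_mul_eq_mul_div, div_eq_div_iff hsx.ne' hx.ne']
  have := Real.sq_sqrt hx.le
  field_simp
  rw [this]

lemma sz_floor_lim2 (s : ℝ) : Tendsto (fun x : ℝ => (⌊x + s * √x⌋₊ : ℝ) / x) atTop (𝓝 1) := by
  have := (sz_floor_lim1 s).const_add 1
  rw [add_zero] at this
  refine this.congr' ?_
  filter_upwards [eventually_gt_atTop 0] with x hx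
  field_simp
  ring

lemma sz_floor_lim3 (s : ℝ) : Tendsto (fun x : ℝ => ⌊x + s * √x⌋₊) atTop atTop := by
  rw [← tendsto_natCast_atTop_iff (R := ℝ)]
  have := (sz_floor_lim2 s).pos_mul_atTop one_pos tendsto_id
  refine this.congr' ?_
  filter_upwards [eventually_gt_atTop 0] with x hx
  simp only [id]
  field_simp

lemma szp_lim (s : ℝ) : Tendsto (fun x : ℝ => √x * szp x ⌊x + s * √x⌋₊) atTop
    (𝓝 (Real.exp (-s ^ 2 / 2) / √(2 * π))) := by
  have hst := Stirling.tendsto_stirlingSeq_sqrt_pi.comp (sz_floor_lim3 s)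
  have hu := sz_floor_lim1 s
  have hxu : Tendsto (fun x : ℝ => √x * (((⌊x + s * √x⌋₊ : ℝ) - x) / x)) atTop (𝓝 s) := by
    refine (sz_floor_lim s).congr' ?_
    filter_upwards [eventually_gt_atTop 0] with x hx
    have hsx : 0 < √x := by positivity
    have := Real.sq_sqrt hx.le
    field_simp
    rw [this]
  have hE := (sz_h_lim tendsto_id hu hxu).neg.rexp
  have hr := ((sz_floor_lim2 s).const_mul 2).sqrt.inv₀ (by positivity)
  have hF := (hr.mul (hst.inv₀ (by positivity))).mul hE
  have e : (√(2 * 1))⁻¹ * (√π)⁻¹ * Real.exp (-(s ^ 2 / 2)) = Real.exp (-s ^ 2 / 2) / √(2 * π) := by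
    rw [Real.sqrt_mul (by norm_num) π, mul_one, neg_div]
    field_simp
  rw [e] at hF
  refine hF.congr' ?_
  filter_upwards [eventually_gt_atTop 0, (sz_floor_lim3 s).eventually_gt_atTop 0] with x hx hj
  simp only [Function.comp, id]
  set j := ⌊x + s * √x⌋₊
  have hj' : (0:ℝ) < j := by exact_mod_cast hj
  have e1 : 1 + ((j:ℝ) - x) / x = j / x := by field_simp; ring
  rw [e1]
  have e2 : -(x * ((j:ℝ) / x * Real.log (j / x) - (j - x) / x)) = -x + j * Real.log (x / j) + j := by
    rw [← inv_div x (j:ℝ), Real.log_inv]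
    field_simp
    ring
  have h1 : Real.exp (-x + j * Real.log (x / j) + j) = Real.exp (-x) * x ^ j / (j / Real.exp 1) ^ j := by
    rw [Real.exp_add, Real.exp_add, mul_comm (j : ℝ), Real.exp_mul, Real.exp_log (by positivity),
      Real.rpow_natCast, div_pow, div_pow, ← Real.exp_nat_mul]
    field_simp
  rw [e2, h1, szp, Stirling.stirlingSeq, show 2 * ((j:ℝ) / x) = 2 * j / x by ring, Real.sqrt_div (by positivity)]
  have : 0 < √(2 * (j:ℝ)) := by positivity
  field_simp

lemma sz_tsum_integral (g : ℕ → ℝ) (hg : ∀ j, 0 ≤ g j) :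
    ∫ y : ℝ, Set.indicator (Set.Ici 0) (fun y => g ⌊y⌋₊) y = ∑' j, g j := by
  have hm : Measurable (fun y : ℝ => g ⌊y⌋₊) := (measurable_from_nat (f := g)).comp Nat.measurable_floor
  rw [integral_indicator measurableSet_Ici]
  rw [integral_eq_lintegral_of_nonneg_ae (Eventually.of_forall fun y => hg _) hm.aestronglyMeasurable]
  have hU : Set.Ici (0:ℝ) = ⋃ n : ℕ, Set.Ico (n : ℝ) (n + 1) := by
    ext y
    simp only [Set.mem_Ici, Set.mem_iUnion, Set.mem_Ico]
    constructor
    · intro h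
      exact ⟨⌊y⌋₊, Nat.floor_le h, Nat.lt_floor_add_one y⟩
    · rintro ⟨n, h, _⟩
      exact le_trans (Nat.cast_nonneg n) h
  have hfl : ∀ (n : ℕ) (y : ℝ), y ∈ Set.Ico (n : ℝ) (n + 1) → ⌊y⌋₊ = n := by
    intro n y hy
    rw [Nat.floor_eq_iff (le_trans (Nat.cast_nonneg n) hy.1)]
    exact hy
  rw [hU, lintegral_iUnion (fun i => measurableSet_Ico)]
  · have : ∀ n : ℕ, ∫⁻ y in Set.Ico (n : ℝ) (n + 1), ENNReal.ofReal (g ⌊y⌋₊) = ENNReal.ofReal (g n) := by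
      intro n
      rw [setLIntegral_congr_fun measurableSet_Ico (g := fun _ => ENNReal.ofReal (g n))
        (fun y hy => by simp only [hfl n y hy])]
      simp
    simp only [this]
    rw [ENNReal.tsum_toReal_eq (fun _ => ENNReal.ofReal_ne_top)]
    simp only [ENNReal.toReal_ofReal (hg _)]
  · intro m n hmn
    rw [Function.onFun, Set.disjoint_left]
    intro y h1 h2
    exact hmn ((hfl m y h1).symm.trans (hfl n y h2))

lemma sz_integrable_exp_neg_abs : Integrable (fun s : ℝ => Real.exp (-|s|)) := by
  have h1 : IntegrableOn (fun s : ℝ => Real.exp (-|s|)) (Set.Ioi 0) := by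
    refine (integrableOn_exp_neg_Ioi 0).congr_fun ?_ measurableSet_Ioi
    intro s hs
    simp only [abs_of_pos (Set.mem_Ioi.1 hs)]
  have h2 : IntegrableOn (fun s : ℝ => Real.exp (-|s|)) (Set.Iic 0) := by
    refine (integrableOn_exp_Iic 0).congr_fun ?_ measurableSet_Iic
    intro s hs
    simp only [abs_of_nonpos (Set.mem_Iic.1 hs), neg_neg]
  rw [← integrableOn_univ, ← Set.Iic_union_Ioi (a := (0:ℝ))]
  exact h2.union h1

noncomputable def szc : ℝ := 1 / (2 * (2 * π) ^ ((3:ℝ)/2))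

lemma szc_pos : 0 < szc := by unfold szc; positivity

lemma sz_main {α : Type*} {l : Filter α} [l.IsCountablyGenerated] (x : α → ℝ) (hx : Tendsto x l atTop)
    (w : α → ℕ → ℝ) (hw0 : ∀ a j, 0 ≤ w a j) (hw1 : ∀ a j, w a j ≤ 1) (W : ℝ)
    (hW : ∀ s : ℝ, Tendsto (fun a => w a ⌊x a + s * √(x a)⌋₊) l (𝓝 W)) :
    Tendsto (fun a => (x a) ^ ((3:ℝ)/2) * ∑' j, (szp (x a) j) ^ 4 * w a j) l (𝓝 (szc * W)) := by
  let F : α → ℝ → ℝ := fun a s => Set.indicator (Set.Ici 0)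
    (fun y : ℝ => (√(x a) * szp (x a) ⌊y⌋₊) ^ 4 * w a ⌊y⌋₊) (x a + s * √(x a))
  have hFm : ∀ a, Measurable (F a) := by
    intro a
    have h1 : Measurable (fun y : ℝ => (√(x a) * szp (x a) ⌊y⌋₊) ^ 4 * w a ⌊y⌋₊) :=
      (measurable_from_nat (f := fun j => (√(x a) * szp (x a) j) ^ 4 * w a j)).comp Nat.measurable_floor
    exact (h1.indicator measurableSet_Ici).comp (by fun_prop)
  have key : Tendsto (fun a => ∫ s, F a s) l (𝓝 (∫ s, (Real.exp (-s ^ 2 / 2) / √(2 * π)) ^ 4 * W)) := by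
    apply tendsto_integral_filter_of_dominated_convergence (fun s => 16 * Real.exp 2 * Real.exp (-|s|))
    · exact Eventually.of_forall fun a => (hFm a).aestronglyMeasurable
    · filter_upwards [hx.eventually_ge_atTop 1] with a ha
      refine Eventually.of_forall fun s => ?_
      simp only [F]
      by_cases h : 0 ≤ x a + s * √(x a)
      · rw [Set.indicator_of_mem (by exact h), Real.norm_eq_abs, abs_of_nonneg (mul_nonneg (by positivity) (hw0 _ _))]
        calc _ ≤ (√(x a) * szp (x a) ⌊x a + s * √(x a)⌋₊) ^ 4 * 1 := by gcongr; exact hw1 _ _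
          _ ≤ _ := by rw [mul_one]; exact szp_bound2 ha h
      · rw [Set.indicator_of_notMem (by exact h), norm_zero]
        positivity
    · exact sz_integrable_exp_neg_abs.const_mul _
    · refine Eventually.of_forall fun s => ?_
      have h1 := (((szp_lim s).comp hx).pow 4).mul (hW s)
      refine h1.congr' ?_
      filter_upwards [hx.eventually_gt_atTop (max 0 (s ^ 2))] with a ha
      have hx0 : 0 < x a := lt_of_le_of_lt (le_max_left _ _) ha
      have hx1 : s ^ 2 < x a := lt_of_le_of_lt (le_max_right _ _) ha
      have h2 : |s| < √(x a) := Real.lt_sqrt_of_sq_lt (by rwa [sq_abs])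
      have h3 : 0 ≤ x a + s * √(x a) := by
        have := Real.sq_sqrt hx0.le
        have : 0 < √(x a) := by positivity
        nlinarith [neg_abs_le s]
      simp only [F]
      rw [Set.indicator_of_mem (by exact h3)]
      rfl
  have hlim : ∫ s : ℝ, (Real.exp (-s ^ 2 / 2) / √(2 * π)) ^ 4 * W = szc * W := by
    rw [integral_mul_const]
    congr 1
    have : ∀ s : ℝ, (Real.exp (-s ^ 2 / 2) / √(2 * π)) ^ 4 = Real.exp (-2 * s ^ 2) * ((2 * π) ^ 2)⁻¹ := by
      intro s
      rw [div_pow, ← Real.exp_nat_mul, show √(2 * π) ^ 4 = (√(2 * π) ^ 2) ^ 2 by ring, Real.sq_sqrt (by positivity), div_eq_mul_inv]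
      congr 2
      push_cast
      ring
    simp only [this]
    rw [integral_mul_const, integral_gaussian, szc]
    have h3 : (2 * π) ^ ((3:ℝ)/2) = (2 * π) * √(2 * π) := by
      rw [show (3:ℝ)/2 = 1 + 1/2 by norm_num, Real.rpow_add (by positivity), Real.rpow_one, Real.sqrt_eq_rpow]
    have h4 : √(π / 2) = √(2 * π) / 2 := by
      rw [show π / 2 = (2 * π) / 2 ^ 2 by ring, Real.sqrt_div (by positivity), Real.sqrt_sq (by norm_num)]
    rw [h3, h4]
    have h5 : √(2 * π) ^ 2 = 2 * π := Real.sq_sqrt (by positivity)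
    have : 0 < √(2 * π) := by positivity
    field_simp
    linear_combination h5
  rw [hlim] at key
  refine key.congr' ?_
  filter_upwards [hx.eventually_ge_atTop 1] with a ha
  have hx0 : 0 < x a := by linarith
  have hsx : 0 < √(x a) := by positivity
  have h1 := sz_tsum_integral (fun j => (√(x a) * szp (x a) j) ^ 4 * w a j)
    (fun j => mul_nonneg (by positivity) (hw0 _ _))
  have h2 : ∫ s, F a s = (√(x a))⁻¹ * ∑' j, (√(x a) * szp (x a) j) ^ 4 * w a j := by
    rw [← h1]
    set ψ : ℝ → ℝ := fun y => Set.indicator (Set.Ici 0)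
      (fun y : ℝ => (√(x a) * szp (x a) ⌊y⌋₊) ^ 4 * w a ⌊y⌋₊) y with hψ
    have e1 : ∀ s, F a s = (fun z => ψ (x a + z)) (√(x a) * s) := by
      intro s
      simp only [F, hψ, mul_comm s]
    simp only [e1]
    rw [Measure.integral_comp_mul_left (fun z => ψ (x a + z)), integral_add_left_eq_self ψ (x a), smul_eq_mul,
      abs_of_pos (by positivity)]
  rw [h2]
  simp only [mul_pow, mul_assoc]
  rw [tsum_mul_left, ← mul_assoc]
  congr 1
  rw [show (3:ℝ)/2 = 1 + 1/2 by norm_num, Real.rpow_add hx0, Real.rpow_one, ← Real.sqrt_eq_rpow]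
  have h5 : √(x a) ^ 2 = x a := Real.sq_sqrt hx0.le
  field_simp
  linear_combination h5

noncomputable def szr (n j : ℕ) : ℝ := (n.descFactorial j : ℝ) / (n : ℝ) ^ j

lemma szr_nonneg (n j : ℕ) : 0 ≤ szr n j := by unfold szr; positivity

lemma szr_le_one (n j : ℕ) : szr n j ≤ 1 := by
  unfold szr
  apply div_le_one_of_le₀ _ (by positivity)
  exact_mod_cast Nat.descFactorial_le_pow n j

lemma szr_eq_zero {n j : ℕ} (h : n < j) : szr n j = 0 := by
  unfold szr
  rw [Nat.descFactorial_of_lt h]; simp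

lemma szr_succ {n : ℕ} (hn : 0 < n) (k : ℕ) (hk : k ≤ n) : szr n (k + 1) = (1 - (k:ℝ) / n) * szr n k := by
  unfold szr
  rw [Nat.descFactorial_succ, pow_succ]
  have : (0:ℝ) < n := by exact_mod_cast hn
  push_cast [Nat.cast_sub hk]
  field_simp

lemma sz_choose {n : ℕ} (hn : 0 < n) (j : ℕ) : (n.choose j : ℝ) / (j.factorial : ℝ) = (n : ℝ) ^ j / (j.factorial : ℝ) ^ 2 * szr n j := by
  unfold szr
  rw [Nat.descFactorial_eq_factorial_mul_choose]
  have : (0:ℝ) < n := by exact_mod_cast hn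
  push_cast
  field_simp

lemma szr_upper {n : ℕ} (hn : 0 < n) (j : ℕ) : szr n j ≤ Real.exp (-((j:ℝ) * (j - 1) / (2 * n))) := by
  have hn' : (0:ℝ) < n := by exact_mod_cast hn
  induction j with
  | zero => simp [szr]
  | succ k ih =>
    by_cases hk : k ≤ n
    · rw [szr_succ hn k hk]
      have h1 : 1 - (k:ℝ) / n ≤ Real.exp (-(k / n)) := by
        have := Real.add_one_le_exp (-((k:ℝ) / n)); linarith
      calc (1 - (k:ℝ) / n) * szr n k ≤ Real.exp (-(k / n)) * Real.exp (-((k:ℝ) * (k - 1) / (2 * n))) := by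
            apply mul_le_mul h1 ih (szr_nonneg _ _) (Real.exp_pos _).le
        _ = _ := by
            rw [← Real.exp_add]
            congr 1
            push_cast
            field_simp
            ring
    · rw [szr_eq_zero (by omega)]; positivity

lemma sz_exp_low {t : ℝ} (h0 : 0 ≤ t) (h1 : t ≤ 1 / 5) : Real.exp (-t - 2 * t ^ 2) ≤ 1 - t := by
  have h2 := Real.abs_exp_sub_one_sub_id_le (x := -t - 2 * t ^ 2) (by
    rw [abs_le]; constructor <;> nlinarith)
  have h3 := (abs_le.1 h2).2
  have : 0 ≤ t ^ 2 * (2 - (1 + 2 * t) ^ 2) := by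
    apply mul_nonneg (sq_nonneg t); nlinarith
  nlinarith

lemma szr_lower {n : ℕ} (hn : 0 < n) (j : ℕ) (hj : 5 * j ≤ n) :
    Real.exp (-((j:ℝ) * (j - 1) / (2 * n)) - 2 * (j:ℝ) ^ 3 / (n:ℝ) ^ 2) ≤ szr n j := by
  have hn' : (0:ℝ) < n := by exact_mod_cast hn
  induction j with
  | zero => simp [szr]
  | succ k ih =>
    have ih := ih (by omega)
    rw [szr_succ hn k (by omega)]
    have hk5 : (k:ℝ) / n ≤ 1 / 5 := by
      rw [div_le_div_iff₀ hn' (by norm_num)]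
      have : k * 5 ≤ 1 * n := by omega
      exact_mod_cast this
    have h1 := sz_exp_low (t := (k:ℝ) / n) (by positivity) hk5
    calc _ ≤ Real.exp (-((k:ℝ) / n) - 2 * ((k:ℝ) / n) ^ 2) * Real.exp (-((k:ℝ) * (k - 1) / (2 * n)) - 2 * (k:ℝ) ^ 3 / (n:ℝ) ^ 2) := by
          rw [← Real.exp_add]
          apply Real.exp_le_exp.2
          have e1 : (-((k:ℝ) / n) - 2 * ((k:ℝ) / n) ^ 2) + (-((k:ℝ) * (k - 1) / (2 * n)) - 2 * (k:ℝ) ^ 3 / (n:ℝ) ^ 2)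
             - (-((((k + 1 : ℕ):ℝ)) * (((k + 1 : ℕ):ℝ) - 1) / (2 * n)) - 2 * (((k + 1 : ℕ):ℝ)) ^ 3 / (n:ℝ) ^ 2)
             = 2 * (2 * (k:ℝ) ^ 2 + 3 * k + 1) / (n:ℝ)^2 := by
            push_cast
            field_simp
            ring
          have : 0 ≤ 2 * (2 * (k:ℝ) ^ 2 + 3 * k + 1) / (n:ℝ)^2 := by positivity
          linarith
      _ ≤ _ := by
          apply mul_le_mul h1 ih (Real.exp_pos _).le
          linarith

lemma szr_lim {α : Type*} {l : Filter α} (n j : α → ℕ) (hn : Tendsto n l atTop)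
    (hj : Tendsto (fun a => (j a : ℝ) / √(n a)) l (𝓝 1)) :
    Tendsto (fun a => szr (n a) (j a)) l (𝓝 (Real.exp (-(1/2)))) := by
  have hnR : Tendsto (fun a => (n a : ℝ)) l atTop := tendsto_natCast_atTop_iff.2 hn
  have hs : Tendsto (fun a => √(n a : ℝ)) l atTop := Real.tendsto_sqrt_atTop.comp hnR
  have hsi : Tendsto (fun a => (√(n a : ℝ))⁻¹) l (𝓝 0) := hs.inv_tendsto_atTop
  have h1 : Tendsto (fun a => -((j a : ℝ) * (j a - 1) / (2 * n a))) l (𝓝 (-(1/2))) := by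
    have : Tendsto (fun a => -((((j a : ℝ) / √(n a)) * ((j a : ℝ) / √(n a)) - ((j a : ℝ) / √(n a)) * (√(n a : ℝ))⁻¹) / 2)) l (𝓝 (-((1 * 1 - 1 * 0) / 2))) :=
      (((hj.mul hj).sub (hj.mul hsi)).div_const 2).neg
    rw [show (-(((1:ℝ) * 1 - 1 * 0) / 2)) = -(1/2) by norm_num] at this
    refine this.congr' ?_
    filter_upwards [hn.eventually_gt_atTop 0] with a ha
    have ha' : (0:ℝ) < n a := by exact_mod_cast ha
    have h5 : √(n a : ℝ) ^ 2 = n a := Real.sq_sqrt ha'.le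
    have : 0 < √(n a : ℝ) := by positivity
    rw [show (j a : ℝ) * (j a - 1) / (2 * n a) = (j a : ℝ) * (j a - 1) / (2 * √(n a : ℝ) ^ 2) by rw [h5]]
    field_simp
  have h2 : Tendsto (fun a => 2 * (j a : ℝ) ^ 3 / (n a : ℝ) ^ 2) l (𝓝 0) := by
    have : Tendsto (fun a => 2 * ((j a : ℝ) / √(n a)) ^ 3 * (√(n a : ℝ))⁻¹) l (𝓝 (2 * 1 ^ 3 * 0)) :=
      ((hj.pow 3).const_mul 2).mul hsi
    rw [mul_zero] at this
    refine this.congr' ?_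
    filter_upwards [hn.eventually_gt_atTop 0] with a ha
    have ha' : (0:ℝ) < n a := by exact_mod_cast ha
    have h5 : √(n a : ℝ) ^ 2 = n a := Real.sq_sqrt ha'.le
    have : 0 < √(n a : ℝ) := by positivity
    rw [show 2 * (j a : ℝ) ^ 3 / (n a : ℝ) ^ 2 = 2 * (j a : ℝ) ^ 3 / (√(n a : ℝ) ^ 2) ^ 2 by rw [h5]]
    field_simp
  have h3 : Tendsto (fun a => -((j a : ℝ) * (j a - 1) / (2 * n a)) - 2 * (j a : ℝ) ^ 3 / (n a : ℝ) ^ 2) l (𝓝 (-(1/2))) := by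
    simpa using h1.sub h2
  have h4 : ∀ᶠ a in l, 5 * j a ≤ n a := by
    have : Tendsto (fun a => (j a : ℝ) / √(n a) * (√(n a : ℝ))⁻¹) l (𝓝 (1 * 0)) := hj.mul hsi
    rw [mul_zero] at this
    filter_upwards [hn.eventually_gt_atTop 0, this.eventually (gt_mem_nhds (show (0:ℝ) < 1/5 by norm_num))] with a ha hb
    have ha' : (0:ℝ) < n a := by exact_mod_cast ha
    have h5 : √(n a : ℝ) ^ 2 = n a := Real.sq_sqrt ha'.le
    have : 0 < √(n a : ℝ) := by positivity
    rw [div_mul_eq_mul_div, div_lt_iff₀ this, mul_inv_lt_iff₀ this] at hb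
    have : 5 * (j a : ℝ) ≤ n a := by nlinarith
    exact_mod_cast this
  apply tendsto_of_tendsto_of_tendsto_of_le_of_le' h3.rexp h1.rexp
  · filter_upwards [hn.eventually_gt_atTop 0, h4] with a ha hb
    exact szr_lower ha _ hb
  · filter_upwards [hn.eventually_gt_atTop 0] with a ha
    exact szr_upper ha _

lemma sz_sqrt_nat : Tendsto (fun n : ℕ => √(n:ℝ)) atTop atTop :=
  Real.tendsto_sqrt_atTop.comp tendsto_natCast_atTop_atTop

lemma szA_lim : Tendsto (fun n : ℕ => (√(n:ℝ)) ^ ((3:ℝ)/2) * (Real.exp (-(4 * √(n:ℝ))) * szA n)) atTop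
    (𝓝 (szc * Real.exp (-1))) := by
  have h := sz_main (l := atTop) (fun n : ℕ => √(n:ℝ)) sz_sqrt_nat (fun n j => szr n j ^ 2)
    (fun n j => by positivity) (fun n j => pow_le_one₀ (szr_nonneg _ _) (szr_le_one _ _)) (Real.exp (-1)) (by
      intro s
      have := (szr_lim (l := atTop) (fun n : ℕ => n) (fun n : ℕ => ⌊√(n:ℝ) + s * √√(n:ℝ)⌋₊) tendsto_id
        ((sz_floor_lim2 s).comp sz_sqrt_nat)).pow 2
      rw [← Real.exp_nat_mul, show ((2:ℕ):ℝ) * -(1/2) = -1 by norm_num] at this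
      exact this)
  refine h.congr' ?_
  filter_upwards [eventually_gt_atTop 0] with n hn
  congr 1
  rw [tsum_eq_sum (s := Finset.range (n + 1)), szA, Finset.mul_sum]
  · apply Finset.sum_congr rfl
    intro j _
    rw [sz_choose hn, szp]
    have h5 : √(n : ℝ) ^ 2 = n := Real.sq_sqrt (Nat.cast_nonneg n)
    have h6 : (√(n : ℝ) ^ j) ^ 4 = ((n:ℝ) ^ j) ^ 2 := by
      conv_rhs => rw [← h5]
      rw [← pow_mul, ← pow_mul, ← pow_mul]; ring
    rw [div_pow, mul_pow, h6, ← Real.exp_nat_mul]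
    rw [show ((4:ℕ):ℝ) * -√(n:ℝ) = -(4 * √(n:ℝ)) by push_cast; ring]
    field_simp
  · intro j hj
    rw [szr_eq_zero (by simpa using hj)]; simp

lemma szV_lim : Tendsto (fun n : ℕ => (√(n:ℝ)) ^ ((3:ℝ)/2) * (Real.exp (-(4 * √(n:ℝ))) * szV n)) atTop
    (𝓝 szc) := by
  have h := sz_main (l := atTop) (fun n : ℕ => √(n:ℝ)) sz_sqrt_nat (fun n j => if j ≤ n then 1 else 0)
    (fun n j => by split_ifs <;> norm_num) (fun n j => by split_ifs <;> norm_num) 1 (by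
      intro s
      apply tendsto_const_nhds.congr'
      have h1 := (sz_floor_lim2 s).comp sz_sqrt_nat
      have h2 := h1.mul (sz_sqrt_nat.inv_tendsto_atTop)
      rw [mul_zero] at h2
      filter_upwards [eventually_gt_atTop 0, h2.eventually (gt_mem_nhds (show (0:ℝ) < 1 by norm_num))] with n ha hb
      have ha' : (0:ℝ) < n := by exact_mod_cast ha
      have h5 : √(n : ℝ) ^ 2 = n := Real.sq_sqrt ha'.le
      have : 0 < √(n : ℝ) := by positivity
      simp only [Function.comp, Pi.inv_apply] at hb
      rw [div_mul_eq_mul_div, div_lt_iff₀ this, mul_inv_lt_iff₀ this] at hb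
      rw [if_pos]
      have : (⌊√(n:ℝ) + s * √√(n:ℝ)⌋₊ : ℝ) ≤ n := by nlinarith
      exact_mod_cast this)
  rw [mul_one] at h
  refine h.congr' ?_
  filter_upwards [eventually_gt_atTop 0] with n hn
  congr 1
  rw [tsum_eq_sum (s := Finset.range (n + 1)), szV, Finset.mul_sum]
  · apply Finset.sum_congr rfl
    intro j hj
    rw [if_pos (by simp at hj; omega), szp]
    have h5 : √(n : ℝ) ^ 2 = n := Real.sq_sqrt (Nat.cast_nonneg n)
    have h6 : (√(n : ℝ) ^ j) ^ 4 = ((n:ℝ) ^ j) ^ 2 := by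
      conv_rhs => rw [← h5]
      rw [← pow_mul, ← pow_mul, ← pow_mul]; ring
    rw [div_pow, mul_pow, h6, ← Real.exp_nat_mul]
    rw [show ((4:ℕ):ℝ) * -√(n:ℝ) = -(4 * √(n:ℝ)) by push_cast; ring]
    field_simp
  · intro j hj
    rw [if_neg (by simp at hj; omega)]; simp

noncomputable def szF : Filter (ℕ × ℕ) :=
  comap Prod.fst atTop ⊓ 𝓟 {p | p.2 ≤ p.1 ∧ √(p.1:ℝ) ≤ √(p.2:ℝ) + √√√(p.1:ℝ)}

instance : szF.IsCountablyGenerated := by unfold szF; infer_instance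

lemma szF_fst : Tendsto (fun p : ℕ × ℕ => p.1) szF atTop := tendsto_comap.mono_left inf_le_left

lemma szF_ev : ∀ᶠ p : ℕ × ℕ in szF, p.2 ≤ p.1 ∧ √(p.1:ℝ) ≤ √(p.2:ℝ) + √√√(p.1:ℝ) :=
  (inf_le_right : szF ≤ _) (mem_principal_self _)

lemma szF_y : Tendsto (fun p : ℕ × ℕ => √√√(p.1:ℝ)) szF atTop :=
  Real.tendsto_sqrt_atTop.comp (Real.tendsto_sqrt_atTop.comp (sz_sqrt_nat.comp szF_fst))

lemma szF_ratio : Tendsto (fun p : ℕ × ℕ => √(p.2:ℝ) / √(p.1:ℝ)) szF (𝓝 1) := by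
  have h0 : Tendsto (fun p : ℕ × ℕ => 1 - (√√√(p.1:ℝ))⁻¹ ^ 3) szF (𝓝 1) := by
    simpa using (szF_y.inv_tendsto_atTop.pow 3).const_sub 1
  apply tendsto_of_tendsto_of_tendsto_of_le_of_le' h0 tendsto_const_nhds
  · filter_upwards [szF_ev, szF_fst.eventually_gt_atTop 0] with p hp hp0
    have hp' : (0:ℝ) < p.1 := by exact_mod_cast hp0
    have h1 : √(p.1:ℝ) = √√√(p.1:ℝ) ^ 4 := by
      rw [show √√√(p.1:ℝ) ^ 4 = (√√√(p.1:ℝ) ^ 2) ^ 2 by ring, Real.sq_sqrt (by positivity), Real.sq_sqrt (by positivity)]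
    have h2 := hp.2
    set y := √√√(p.1:ℝ)
    have hy : 0 < y := by positivity
    rw [h1] at h2 ⊢
    rw [le_div_iff₀ (by positivity)]
    have : (1 - y⁻¹ ^ 3) * y ^ 4 = y ^ 4 - y := by field_simp
    rw [this]; linarith
  · filter_upwards [szF_ev, szF_fst.eventually_gt_atTop 0] with p hp hp0
    have hp' : (0:ℝ) < p.1 := by exact_mod_cast hp0
    rw [div_le_one (by positivity)]
    apply Real.sqrt_le_sqrt
    exact_mod_cast hp.1

lemma szF_snd : Tendsto (fun p : ℕ × ℕ => p.2) szF atTop := by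
  rw [← tendsto_natCast_atTop_iff (R := ℝ)]
  have h := szF_ratio.pos_mul_atTop one_pos (sz_sqrt_nat.comp szF_fst)
  have h2 := h.atTop_mul_atTop₀ h
  refine h2.congr' ?_
  filter_upwards [szF_fst.eventually_gt_atTop 0] with p hp0
  have hp' : (0:ℝ) < p.1 := by exact_mod_cast hp0
  have : 0 < √(p.1:ℝ) := by positivity
  simp only [Function.comp]
  rw [div_mul_cancel₀ _ this.ne', Real.mul_self_sqrt (Nat.cast_nonneg _)]

noncomputable def szx (p : ℕ × ℕ) : ℝ := √(√(p.1:ℝ) * √(p.2:ℝ))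

lemma szx_lim : Tendsto szx szF atTop :=
  Real.tendsto_sqrt_atTop.comp ((sz_sqrt_nat.comp szF_fst).atTop_mul_atTop₀ (sz_sqrt_nat.comp szF_snd))

lemma szx_ratio : Tendsto (fun p => szx p / √(p.2:ℝ)) szF (𝓝 1) := by
  have h := (szF_ratio.inv₀ one_ne_zero).sqrt
  simp only [inv_one, Real.sqrt_one] at h
  refine h.congr' ?_
  filter_upwards [szF_fst.eventually_gt_atTop 0, szF_snd.eventually_gt_atTop 0] with p hp0 hp1
  have hp' : (0:ℝ) < √(p.1:ℝ) := by positivity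
  have hp'' : (0:ℝ) < √(p.2:ℝ) := by positivity
  rw [szx]
  generalize √(p.1:ℝ) = A at hp' ⊢
  generalize √(p.2:ℝ) = B at hp'' ⊢
  have hB : √B ^ 2 = B := Real.sq_sqrt hp''.le
  have hB' : 0 < √B := by positivity
  rw [inv_div, Real.sqrt_div hp'.le, Real.sqrt_mul hp'.le, div_eq_div_iff hB'.ne' hp''.ne']
  linear_combination (-√A) * hB

lemma szG_lim : Tendsto (fun p : ℕ × ℕ => (szx p) ^ ((3:ℝ)/2) * (Real.exp (-(4 * szx p)) * szG p.1 p.2)) szF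
    (𝓝 (szc * Real.exp (-(1/2)))) := by
  have h := sz_main (l := szF) szx szx_lim (fun p j => szr p.2 j)
    (fun n j => szr_nonneg _ _) (fun n j => szr_le_one _ _) (Real.exp (-(1/2))) (by
      intro s
      refine (szr_lim (l := szF) (fun p => p.2) (fun p => ⌊szx p + s * √(szx p)⌋₊) szF_snd ?_)
      have h1 := ((sz_floor_lim2 s).comp szx_lim).mul szx_ratio
      rw [mul_one] at h1
      refine h1.congr' ?_
      filter_upwards [szx_lim.eventually_gt_atTop 0] with p hp
      simp only [Function.comp]
      field_simp)
  refine h.congr' ?_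
  filter_upwards [szF_snd.eventually_gt_atTop 0] with p hn
  congr 1
  rw [tsum_eq_sum (s := Finset.range (p.2 + 1)), szG, Finset.mul_sum]
  · apply Finset.sum_congr rfl
    intro j _
    rw [sz_choose hn, szp]
    have h6 : (szx p ^ j) ^ 4 = (p.1:ℝ) ^ j * (p.2:ℝ) ^ j := by
      have : szx p ^ 4 = p.1 * p.2 := by
        rw [szx, show ∀ t : ℝ, t ^ 4 = (t ^ 2) ^ 2 by intro t; ring, Real.sq_sqrt (by positivity), mul_pow,
          Real.sq_sqrt (by positivity), Real.sq_sqrt (by positivity)]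
      rw [← mul_pow, ← this, ← pow_mul, ← pow_mul, mul_comm]
    rw [div_pow, mul_pow, h6, ← Real.exp_nat_mul]
    rw [show ((4:ℕ):ℝ) * -szx p = -(4 * szx p) by push_cast; ring]
    field_simp
  · intro j hj
    rw [szr_eq_zero (by simpa using hj)]; simp

lemma sz_exp_lim : Tendsto (fun p : ℕ × ℕ => Real.exp (-(4 * (√√(p.1:ℝ) - √√(p.2:ℝ)) ^ 2))) szF (𝓝 1) := by
  have h0 : Tendsto (fun p : ℕ × ℕ => √√(p.1:ℝ) - √√(p.2:ℝ)) szF (𝓝 0) := by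
    apply squeeze_zero' (g := fun p : ℕ × ℕ => (√√√(p.1:ℝ))⁻¹)
    · filter_upwards [szF_ev] with p hp
      rw [sub_nonneg]
      apply Real.sqrt_le_sqrt
      apply Real.sqrt_le_sqrt
      exact_mod_cast hp.1
    · filter_upwards [szF_ev, szF_fst.eventually_gt_atTop 0] with p hp hp0
      have hp' : (0:ℝ) < p.1 := by exact_mod_cast hp0
      have h1 : √(p.1:ℝ) = √√(p.1:ℝ) ^ 2 := (Real.sq_sqrt (by positivity)).symm
      have h2 : √(p.2:ℝ) = √√(p.2:ℝ) ^ 2 := (Real.sq_sqrt (by positivity)).symm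
      have h3 : √√(p.1:ℝ) = √√√(p.1:ℝ) ^ 2 := (Real.sq_sqrt (by positivity)).symm
      have h4 := hp.2
      have hy : 0 < √√√(p.1:ℝ) := by positivity
      have hz : 0 ≤ √√(p.2:ℝ) := by positivity
      rw [h1, h2] at h4
      set y := √√√(p.1:ℝ)
      set z := √√(p.2:ℝ)
      set q := √√(p.1:ℝ)
      rw [← one_div, le_div_iff₀ hy]
      by_contra hc
      push Not at hc
      have hqz : 0 < q - z := by
        by_contra hc2
        push Not at hc2
        nlinarith
      have h6 : y < (q - z) * y * y := by nlinarith
      have h7 : (q - z) * y * y = (q - z) * q := by rw [h3]; ring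
      nlinarith [mul_nonneg hqz.le hz]
    · exact szF_y.inv_tendsto_atTop
  have := (((h0.pow 2).const_mul 4).neg).rexp
  simpa using this

lemma sz_ratio_lim : Tendsto (fun p : ℕ × ℕ => szG p.1 p.2 ^ 2 / (szV p.1 * szA p.2)) szF (𝓝 1) := by
  have hA := szA_lim.comp szF_snd
  have hV := szV_lim.comp szF_fst
  have hc := szc_pos
  have h := ((szG_lim.pow 2).div (hV.mul hA) (by positivity)).mul sz_exp_lim
  have e : (szc * Real.exp (-(1/2))) ^ 2 / (szc * (szc * Real.exp (-1))) * 1 = 1 := by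
    rw [mul_pow, ← Real.exp_nat_mul, show ((2:ℕ):ℝ) * -(1/2) = -1 by norm_num]
    field_simp
  rw [e] at h
  refine h.congr' ?_
  filter_upwards [szF_fst.eventually_gt_atTop 0, szF_snd.eventually_gt_atTop 0] with p hp0 hp1
  have hp' : (0:ℝ) < √(p.1:ℝ) := by positivity
  have hp'' : (0:ℝ) < √(p.2:ℝ) := by positivity
  simp only [Function.comp, Pi.div_apply]
  have e1 : (szx p ^ ((3:ℝ)/2)) ^ 2 = √(p.1:ℝ) ^ ((3:ℝ)/2) * √(p.2:ℝ) ^ ((3:ℝ)/2) := by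
    rw [← Real.mul_rpow hp'.le hp''.le, szx, Real.sqrt_eq_rpow, ← Real.rpow_natCast, ← Real.rpow_mul (by positivity), ← Real.rpow_mul (by positivity)]
    norm_num
  have e2 : szx p = √√(p.1:ℝ) * √√(p.2:ℝ) := by rw [szx, Real.sqrt_mul hp'.le]
  have e3 : Real.exp (-(4 * (√√(p.1:ℝ) - √√(p.2:ℝ)) ^ 2)) = Real.exp (-(4 * √(p.1:ℝ))) * Real.exp (-(4 * √(p.2:ℝ))) / Real.exp (-(4 * szx p)) ^ 2 := by
    rw [← Real.exp_nat_mul, ← Real.exp_add, ← Real.exp_sub, e2]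
    congr 1
    have h1 : √√(p.1:ℝ) ^ 2 = √(p.1:ℝ) := (Real.sq_sqrt (by positivity))
    have h2 : √√(p.2:ℝ) ^ 2 = √(p.2:ℝ) := (Real.sq_sqrt (by positivity))
    push_cast
    linear_combination (-4) * h1 - 4 * h2
  have g1 : 0 < √(p.1:ℝ) ^ ((3:ℝ)/2) := by positivity
  have g2 : 0 < √(p.2:ℝ) ^ ((3:ℝ)/2) := by positivity
  rw [e3, mul_pow, mul_pow, e1]
  field_simp

noncomputable def szM (n : ℕ) : ℝ := (n:ℝ) ^ (-(1:ℝ)/4) * Real.exp (4 * √(n:ℝ))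
noncomputable def szg (n : ℕ) : ℝ := (n:ℝ) ^ (-(3:ℝ)/4) * Real.exp (4 * √(n:ℝ))

lemma szg_nonneg (n : ℕ) : 0 ≤ szg n := by unfold szg; positivity
lemma szM_nonneg (n : ℕ) : 0 ≤ szM n := by unfold szM; positivity
lemma szg_pos {n : ℕ} (h : 0 < n) : 0 < szg n := by
  have : (0:ℝ) < n := by exact_mod_cast h
  unfold szg; positivity
lemma szM_pos {n : ℕ} (h : 0 < n) : 0 < szM n := by
  have : (0:ℝ) < n := by exact_mod_cast h
  unfold szM; positivity

lemma szg_M {n : ℕ} (h : 0 < n) : szg n * √(n:ℝ) = szM n := by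
  have : (0:ℝ) < n := by exact_mod_cast h
  unfold szg szM
  rw [mul_right_comm, Real.sqrt_eq_rpow, ← Real.rpow_add this]
  norm_num

lemma szAg : Tendsto (fun n => szA n / szg n) atTop (𝓝 (szc * Real.exp (-1))) := by
  refine szA_lim.congr' ?_
  filter_upwards [eventually_gt_atTop 0] with n hn
  have : (0:ℝ) < n := by exact_mod_cast hn
  unfold szg
  rw [Real.sqrt_eq_rpow, ← Real.rpow_mul this.le, Real.exp_neg, neg_div, Real.rpow_neg this.le]
  norm_num
  field_simp

lemma sz_tend_y : Tendsto (fun n : ℕ => 4 * (√((n:ℝ) + 1) - √(n:ℝ)) - 1/4 * Real.log (1 + 1 / (n:ℝ))) atTop (𝓝 0) ∧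
   Tendsto (fun n : ℕ => √(n:ℝ) * (4 * (√((n:ℝ) + 1) - √(n:ℝ)) - 1/4 * Real.log (1 + 1 / (n:ℝ)))) atTop (𝓝 2) := by
  have hs := sz_sqrt_nat
  have hsi : Tendsto (fun n : ℕ => (√(n:ℝ))⁻¹) atTop (𝓝 0) := hs.inv_tendsto_atTop
  have hinv : Tendsto (fun n : ℕ => 1 / (n:ℝ)) atTop (𝓝 0) := tendsto_one_div_atTop_nhds_zero_nat
  have h1 : Tendsto (fun n : ℕ => √(n:ℝ) * (4 * (√((n:ℝ) + 1) - √(n:ℝ)))) atTop (𝓝 2) := by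
    have : Tendsto (fun n : ℕ => 4 / (√(1 + 1 / (n:ℝ)) + 1)) atTop (𝓝 (4 / (√(1 + 0) + 1))) :=
      tendsto_const_nhds.div (((hinv.const_add 1).sqrt).add_const 1) (by positivity)
    rw [show (4:ℝ) / (√(1 + 0) + 1) = 2 by norm_num] at this
    refine this.congr' ?_
    filter_upwards [eventually_gt_atTop 0] with n hn
    have hn' : (0:ℝ) < n := by exact_mod_cast hn
    have e : √((n:ℝ) + 1) = √(n:ℝ) * √(1 + 1 / (n:ℝ)) := by
      rw [← Real.sqrt_mul hn'.le]; congr 1; field_simp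
    rw [e]
    set t := √(1 + 1 / (n:ℝ)) with ht
    have ht2 : t ^ 2 = 1 + 1 / (n:ℝ) := Real.sq_sqrt (by positivity)
    have hs2 : √(n:ℝ) ^ 2 = n := Real.sq_sqrt hn'.le
    have ht0 : 0 ≤ t := by positivity
    rw [div_eq_iff (by positivity)]
    have : √(n:ℝ) * (4 * (√(n:ℝ) * t - √(n:ℝ))) * (t + 1) = 4 * √(n:ℝ) ^ 2 * (t ^ 2 - 1) := by ring
    rw [this, ht2, hs2]; field_simp; ring
  have h2 : Tendsto (fun n : ℕ => √(n:ℝ) * (1/4 * Real.log (1 + 1 / (n:ℝ)))) atTop (𝓝 0) := by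
    apply squeeze_zero (g := fun n : ℕ => (√(n:ℝ))⁻¹) _ _ hsi
    · intro n
      have : 0 ≤ Real.log (1 + 1 / (n:ℝ)) := Real.log_nonneg (by
        have : 0 ≤ 1 / (n:ℝ) := by positivity
        linarith)
      positivity
    · intro n
      rcases Nat.eq_zero_or_pos n with rfl | hn
      · simp
      have hn' : (0:ℝ) < n := by exact_mod_cast hn
      have hs2 : √(n:ℝ) ^ 2 = n := Real.sq_sqrt hn'.le
      have hs0 : 0 < √(n:ℝ) := by positivity
      have h3 : Real.log (1 + 1 / (n:ℝ)) ≤ 1 / (n:ℝ) := by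
        have := Real.log_le_sub_one_of_pos (show 0 < 1 + 1 / (n:ℝ) by positivity)
        linarith
      calc √(n:ℝ) * (1/4 * Real.log (1 + 1 / (n:ℝ))) ≤ √(n:ℝ) * (1 * (1 / (n:ℝ))) := by
            gcongr
            · exact Real.log_nonneg (by
                have : 0 ≤ 1 / (n:ℝ) := by positivity
                linarith)
            · norm_num
        _ = _ := by rw [← hs2, Real.sqrt_sq hs0.le]; field_simp
  have h3 : Tendsto (fun n : ℕ => √(n:ℝ) * (4 * (√((n:ℝ) + 1) - √(n:ℝ)) - 1/4 * Real.log (1 + 1 / (n:ℝ)))) atTop (𝓝 2) := by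
    have := h1.sub h2
    rw [sub_zero] at this
    refine this.congr ?_
    intro n; ring
  refine ⟨?_, h3⟩
  have := hsi.mul h3
  rw [zero_mul] at this
  refine this.congr' ?_
  filter_upwards [eventually_gt_atTop 0] with n hn
  have hn' : (0:ℝ) < n := by exact_mod_cast hn
  have hs0 : 0 < √(n:ℝ) := by positivity
  field_simp

lemma szMg : Tendsto (fun n => (szM (n + 1) - szM n) / szg n) atTop (𝓝 2) := by
  obtain ⟨h1, h2⟩ := sz_tend_y
  set y : ℕ → ℝ := fun n : ℕ => 4 * (√((n:ℝ) + 1) - √(n:ℝ)) - 1/4 * Real.log (1 + 1 / (n:ℝ)) with hy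
  replace h2 : Tendsto (fun n : ℕ => √(n:ℝ) * y n) atTop (𝓝 2) := h2
  have h3 : Tendsto (fun n : ℕ => √(n:ℝ) * (Real.exp (y n) - 1 - y n)) atTop (𝓝 0) := by
    have hb : Tendsto (fun n : ℕ => |√(n:ℝ) * y n| * |y n|) atTop (𝓝 0) := by
      have := h2.abs.mul h1.abs
      rwa [abs_zero, mul_zero] at this
    apply squeeze_zero_norm' _ hb
    have : ∀ᶠ n in atTop, |y n| < 1 := h1.abs.eventually (gt_mem_nhds (by simp))
    filter_upwards [this] with n hn
    have := Real.abs_exp_sub_one_sub_id_le hn.le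
    rw [Real.norm_eq_abs, abs_mul, abs_mul, mul_assoc, ← sq, sq_abs]
    gcongr
  have h4 := h3.add h2
  rw [zero_add] at h4
  refine h4.congr' ?_
  filter_upwards [eventually_gt_atTop 0] with n hn
  have hn' : (0:ℝ) < n := by exact_mod_cast hn
  have hg := szg_pos hn
  have e : szM (n + 1) = szM n * Real.exp (y n) := by
    have e1 : Real.exp (y n) = Real.exp (4 * √((n:ℝ) + 1)) / Real.exp (4 * √(n:ℝ)) * (1 + 1 / (n:ℝ)) ^ (-(1:ℝ)/4) := by
      rw [Real.rpow_def_of_pos (by positivity), ← Real.exp_sub, ← Real.exp_add]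
      congr 1
      rw [hy]; ring
    have e2 : ((n:ℝ) + 1) ^ (-(1:ℝ)/4) = (n:ℝ) ^ (-(1:ℝ)/4) * (1 + 1 / (n:ℝ)) ^ (-(1:ℝ)/4) := by
      rw [← Real.mul_rpow hn'.le (by positivity)]
      congr 1
      field_simp
    rw [e1, szM, szM]
    push_cast
    rw [e2]
    field_simp
  rw [e, ← szg_M hn]
  field_simp
  ring

lemma szg_tendsto : Tendsto szg atTop atTop := by
  have h1 : Tendsto (fun x : ℝ => Real.exp x / x ^ 2) atTop atTop := Real.tendsto_exp_div_pow_atTop 2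
  have h2 := h1.comp sz_sqrt_nat
  apply tendsto_atTop_mono' _ _ h2
  filter_upwards [eventually_gt_atTop 0] with n hn
  have hn' : (1:ℝ) ≤ n := by exact_mod_cast hn
  simp only [Function.comp]
  rw [Real.sq_sqrt (by positivity), szg, div_eq_mul_inv, mul_comm]
  have h3 : ((n:ℝ))⁻¹ ≤ (n:ℝ) ^ (-(3:ℝ)/4) := by
    rw [← Real.rpow_neg_one]
    apply Real.rpow_le_rpow_of_exponent_le hn'
    norm_num
  have : 0 ≤ √(n:ℝ) := by positivity
  gcongr
  linarith

lemma szS_tendsto : Tendsto (fun N => ∑ n ∈ Finset.range N, szg n) atTop atTop := by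
  have : Tendsto (fun N => ∑ n ∈ Finset.range (N + 1), szg n) atTop atTop := by
    apply tendsto_atTop_mono _ szg_tendsto
    intro n
    exact Finset.single_le_sum (fun i _ => szg_nonneg i) (by simp)
  exact (tendsto_add_atTop_iff_nat 1).1 this

lemma sz_stolz (f : ℕ → ℝ) (k : ℝ) (h : Tendsto (fun n => f n / szg n) atTop (𝓝 k)) :
    Tendsto (fun N => (∑ n ∈ Finset.range N, f n) / ∑ n ∈ Finset.range N, szg n) atTop (𝓝 k) := by
  have h1 : (fun n => f n - k * szg n) =o[atTop] szg := by
    rw [Asymptotics.isLittleO_iff_tendsto']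
    · have := h.sub_const k
      rw [sub_self] at this
      refine this.congr' ?_
      filter_upwards [eventually_gt_atTop 0] with n hn
      have := szg_pos hn
      field_simp
    · filter_upwards [eventually_gt_atTop 0] with n hn h0
      exact absurd h0 (szg_pos hn).ne'
  have h2 := (h1.sum_range (fun n => szg_nonneg n) szS_tendsto).tendsto_div_nhds_zero
  have h3 := h2.add_const k
  rw [zero_add] at h3
  refine h3.congr' ?_
  filter_upwards [szS_tendsto.eventually_gt_atTop 0] with N hN
  rw [Finset.sum_sub_distrib, ← Finset.mul_sum]
  field_simp
  ring

lemma szT_lim : Tendsto (fun N => (∑ n ∈ Finset.range (N + 1), szA n) / szM N) atTop (𝓝 (szc * Real.exp (-1) / 2)) := by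
  have h1 := sz_stolz _ _ szAg
  have h2 := sz_stolz _ _ szMg
  have h3 := h1.div h2 two_ne_zero
  have h4 : Tendsto (fun N => (∑ n ∈ Finset.range N, szA n) / szM N) atTop (𝓝 (szc * Real.exp (-1) / 2)) := by
    refine h3.congr' ?_
    filter_upwards [szS_tendsto.eventually_gt_atTop 0] with N hN
    simp only [Pi.div_apply]
    rw [Finset.sum_range_sub, div_div_div_cancel_right₀ hN.ne']
    congr 1
    simp [szM]
  have h5 : Tendsto (fun N => szA N / szM N) atTop (𝓝 0) := by
    have := szAg.mul sz_sqrt_nat.inv_tendsto_atTop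
    rw [mul_zero] at this
    refine this.congr' ?_
    filter_upwards [eventually_gt_atTop 0] with n hn
    have hn' : (0:ℝ) < n := by exact_mod_cast hn
    rw [← szg_M hn]
    simp only [Pi.inv_apply]
    rw [div_mul_eq_div_div]; rfl
  have h6 := h4.add h5
  rw [add_zero] at h6
  refine h6.congr ?_
  intro N
  rw [Finset.sum_range_succ, add_div]

lemma szA_pos (n : ℕ) : 0 < szA n := by
  unfold szA
  apply Finset.sum_pos _ ⟨0, by simp⟩
  intro j hj
  have : 0 < n.choose j := Nat.choose_pos (by simp at hj; omega)
  positivity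

lemma szV_pos {n : ℕ} (hn : 0 < n) : 0 < szV n := by
  unfold szV
  apply Finset.sum_pos _ ⟨0, by simp⟩
  intro j hj
  positivity

lemma szA_le (n : ℕ) : szA n ≤ Real.exp (4 * √(n:ℝ)) := by
  have hs : 0 ≤ √(n:ℝ) := by positivity
  have h1 : ∀ j : ℕ, ((n.choose j : ℝ) / (j.factorial : ℝ)) ^ 2 ≤ Real.exp (3 * √(n:ℝ)) * (√(n:ℝ) ^ j / j.factorial) := by
    intro j
    have h2 : (n.choose j : ℝ) / (j.factorial : ℝ) ≤ (√(n:ℝ) ^ j / j.factorial) ^ 2 := by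
      have h3 := Nat.choose_le_pow_div (α := ℝ) j n
      calc (n.choose j : ℝ) / (j.factorial : ℝ) ≤ ((n:ℝ) ^ j / j.factorial) / j.factorial := by gcongr
        _ = _ := by
          conv_lhs => rw [← Real.sq_sqrt (Nat.cast_nonneg (α := ℝ) n)]
          rw [div_pow, ← pow_mul, ← pow_mul, mul_comm, div_div, sq]
    have h4 : √(n:ℝ) ^ j / j.factorial ≤ Real.exp (√(n:ℝ)) := Real.pow_div_factorial_le_exp _ hs j
    set t := √(n:ℝ) ^ j / j.factorial
    have ht : 0 ≤ t := by positivity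
    calc _ ≤ (t ^ 2) ^ 2 := by gcongr
      _ = t ^ 3 * t := by ring
      _ ≤ Real.exp (√(n:ℝ)) ^ 3 * t := by gcongr
      _ = _ := by rw [← Real.exp_nat_mul]; norm_num
  calc szA n ≤ ∑ j ∈ Finset.range (n + 1), Real.exp (3 * √(n:ℝ)) * (√(n:ℝ) ^ j / j.factorial) :=
        Finset.sum_le_sum fun j _ => h1 j
    _ = Real.exp (3 * √(n:ℝ)) * ∑ j ∈ Finset.range (n + 1), (√(n:ℝ) ^ j / j.factorial) := by rw [Finset.mul_sum]
    _ ≤ Real.exp (3 * √(n:ℝ)) * Real.exp (√(n:ℝ)) := by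
        gcongr; exact Real.sum_le_exp_of_nonneg hs _
    _ = _ := by rw [← Real.exp_add]; congr 1; ring

noncomputable def szd (N : ℕ) : ℝ := ((N:ℝ) + 1) * Real.exp (4 * √(N:ℝ) - 4 * √√√(N:ℝ))

lemma szd_lim : Tendsto (fun N => szd N / ∑ n ∈ Finset.range (N + 1), szA n) atTop (𝓝 0) := by
  have hc := szc_pos
  have hy : Tendsto (fun N : ℕ => √√√(N:ℝ)) atTop atTop :=
    Real.tendsto_sqrt_atTop.comp (Real.tendsto_sqrt_atTop.comp sz_sqrt_nat)
  have h1 : Tendsto (fun N => szd N / szM N) atTop (𝓝 0) := by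
    have h2 := ((Real.tendsto_pow_mul_exp_neg_atTop_nhds_zero 10).comp hy).const_mul 2
    rw [mul_zero] at h2
    apply squeeze_zero' _ _ h2
    · exact Eventually.of_forall fun N => div_nonneg (by unfold szd; positivity) (szM_nonneg N)
    · filter_upwards [hy.eventually_ge_atTop 1, eventually_gt_atTop 0] with N hN hN0
      have hN' : (0:ℝ) < N := by exact_mod_cast hN0
      simp only [Function.comp]
      have e1 : (N:ℝ) = √√√(N:ℝ) ^ 8 := by
        rw [show ∀ t : ℝ, t ^ 8 = ((t ^ 2) ^ 2) ^ 2 by intro t; ring, Real.sq_sqrt (by positivity), Real.sq_sqrt (by positivity), Real.sq_sqrt (by positivity)]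
      set y := √√√(N:ℝ) with hyy
      have hy0 : 0 < y := by linarith
      have e2 : (N:ℝ) ^ (-(1:ℝ)/4) = (y ^ 2)⁻¹ := by
        rw [e1, ← Real.rpow_natCast, ← Real.rpow_mul hy0.le, ← Real.rpow_natCast y 2, ← Real.rpow_neg hy0.le]
        norm_num
      have e3 : szd N / szM N = (y ^ 8 + 1) * y ^ 2 * Real.exp (-(4 * y)) := by
        rw [szd, szM, e2, ← hyy, sub_eq_add_neg, Real.exp_add, ← e1]
        field_simp
      rw [e3]
      have h5 : 1 ≤ y ^ 8 := one_le_pow₀ hN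
      calc (y ^ 8 + 1) * y ^ 2 * Real.exp (-(4 * y)) ≤ (y ^ 8 + y ^ 8) * y ^ 2 * Real.exp (-y) := by
            gcongr; linarith
        _ = _ := by ring
  have h3 := h1.div szT_lim (by positivity)
  rw [zero_div] at h3
  refine h3.congr' ?_
  filter_upwards [eventually_gt_atTop 0] with N hN0
  simp only [Pi.div_apply]
  rw [div_div_div_cancel_right₀ (szM_pos hN0).ne']

lemma sz_lower_ev (ε : ℝ) (h0 : 0 < ε) (h1 : ε < 1) : ∀ᶠ N : ℕ in atTop,
    (1 - ε) * (1 - ε) * szV N * ∑ n ∈ Finset.range (N + 1), szA n ≤ ∑ n ∈ Finset.range (N + 1), szG N n ^ 2 := by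
  have hr := sz_ratio_lim.eventually (lt_mem_nhds (show 1 - ε < 1 by linarith))
  rw [szF, eventually_inf_principal, eventually_comap] at hr
  have hd := szd_lim.eventually (gt_mem_nhds h0)
  filter_upwards [hr, hd, eventually_gt_atTop 0] with N hN hdN hN0
  have hV := szV_pos hN0
  have hT : 0 < ∑ n ∈ Finset.range (N + 1), szA n := Finset.sum_pos (fun n _ => szA_pos n) ⟨0, by simp⟩
  set T := ∑ n ∈ Finset.range (N + 1), szA n with hTd
  rw [div_lt_iff₀ hT] at hdN
  -- termwise bound
  have hterm : ∀ n ∈ Finset.range (N + 1), (1 - ε) * szV N * (szA n - Real.exp (4 * √(N:ℝ) - 4 * √√√(N:ℝ))) ≤ szG N n ^ 2 := by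
    intro n hn
    by_cases hw : √(N:ℝ) ≤ √(n:ℝ) + √√√(N:ℝ)
    · have h2 := hN (N, n) rfl ⟨by simp at hn; omega, hw⟩
      have hA := szA_pos n
      rw [lt_div_iff₀ (by positivity)] at h2
      have h3 : 0 ≤ (1 - ε) * szV N * Real.exp (4 * √(N:ℝ) - 4 * √√√(N:ℝ)) :=
        mul_nonneg (mul_nonneg (by linarith) hV.le) (Real.exp_pos _).le
      simp only at h2
      nlinarith
    · push Not at hw
      have h2 : szA n ≤ Real.exp (4 * √(N:ℝ) - 4 * √√√(N:ℝ)) :=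
        (szA_le n).trans (Real.exp_le_exp.2 (by linarith))
      have h3 : (1 - ε) * szV N * (szA n - Real.exp (4 * √(N:ℝ) - 4 * √√√(N:ℝ))) ≤ 0 :=
        mul_nonpos_of_nonneg_of_nonpos (mul_nonneg (by linarith) hV.le) (by linarith)
      exact h3.trans (sq_nonneg _)
  have hsum := Finset.sum_le_sum hterm
  rw [← Finset.mul_sum, Finset.sum_sub_distrib, ← hTd] at hsum
  refine le_trans ?_ hsum
  have h4 : ∑ i ∈ Finset.range (N + 1), Real.exp (4 * √(N:ℝ) - 4 * √√√(N:ℝ)) = szd N := by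
    simp [szd]
  rw [h4]
  have h5 : (1 - ε) * T ≤ T - szd N := by linarith
  calc (1 - ε) * (1 - ε) * szV N * T = (1 - ε) * szV N * ((1 - ε) * T) := by ring
    _ ≤ _ := mul_le_mul_of_nonneg_left h5 (mul_nonneg (by linarith) hV.le)

/-- **Szegő.** For the Laguerre weight `exp(−x)` on `[0,∞)`,
the smallest eigenvalue `lam N` of the `(N+1)×(N+1)` Hankel matrix satisfies
`lam N ≃ 2^{7/2} π^{3/2} e N^{1/4} exp(−4√N)` as `N → ∞`. -/
theorem szego_laguerre_smallest_eigenvalue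
    (μ : ℕ → ℝ) (hμ : ∀ k, μ k = ∫ x in Set.Ioi (0:ℝ), x ^ k * Real.exp (-x))
    (H : (N : ℕ) → Matrix (Fin (N + 1)) (Fin (N + 1)) ℝ)
    (hH : ∀ N, ∀ j k : Fin (N + 1), H N j k = μ ((j : ℕ) + (k : ℕ)))
    (hpd : ∀ N, (H N).PosDef)
    (lam : ℕ → ℝ)
    (hlam : ∀ N, IsLeast
      {x : ℝ | Module.End.HasEigenvalue (Matrix.toLin' (H N)) x} (lam N)) :
    Tendsto (fun N : ℕ =>
      lam N /
        ((2:ℝ) ^ ((7:ℝ)/2) * π ^ ((3:ℝ)/2) * Real.exp 1 * (N : ℝ) ^ ((1:ℝ)/4) *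
          Real.exp (-4 * Real.sqrt N)))
      atTop (nhds 1) := by
  
  have hHL : ∀ N, H N = szL N * (szL N).transpose := by
    intro N
    ext j k
    rw [hH, hμ, sz_mu, szLLt]
  set T : ℕ → ℝ := fun N => ∑ n ∈ Finset.range (N + 1), szA n with hT
  have hTpos : ∀ N, 0 < T N := fun N => Finset.sum_pos (fun n _ => szA_pos n) ⟨0, by simp⟩
  have h1 : ∀ N, 1 ≤ lam N * T N := by
    intro N
    apply sz_upper
    have := (hlam N).1
    rw [hHL] at this
    exact this
  have hlp : ∀ N, 0 < lam N := by
    intro N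
    by_contra hc
    push Not at hc
    have := mul_nonneg (neg_nonneg.2 hc) (hTpos N).le
    linarith [h1 N]
  have h2 : ∀ N, lam N * ∑ n ∈ Finset.range (N + 1), (szG N n) ^ 2 ≤ szV N := by
    intro N
    apply sz_lower _ _ (hlp N).le
    intro x hx
    apply (hlam N).2
    rw [← hHL] at hx
    exact hx
  have h3 : Tendsto (fun N => lam N * T N) atTop (𝓝 1) := by
    rw [tendsto_order]
    constructor
    · intro b hb
      exact Eventually.of_forall fun N => lt_of_lt_of_le hb (h1 N)
    · intro b hb
      set ε := (b - 1) / (2 * b) with hε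
      have hb0 : 0 < b := by linarith
      have e0 : 0 < ε := div_pos (by linarith) (by linarith)
      have e1 : ε < 1 := by rw [hε, div_lt_one (by linarith)]; linarith
      have e2 : 1 < b * ((1 - ε) * (1 - ε)) := by
        have : b * (2 * ε) = b - 1 := by rw [hε]; field_simp
        nlinarith [mul_pos hb0 (mul_pos e0 e0)]
      filter_upwards [sz_lower_ev ε e0 e1, eventually_gt_atTop 0] with N hN hN0
      have hV := szV_pos hN0
      have h4 : lam N * ((1 - ε) * (1 - ε) * szV N * T N) ≤ szV N :=
        (mul_le_mul_of_nonneg_left hN (hlp N).le).trans (h2 N)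
      have h5 : (lam N * T N) * ((1 - ε) * (1 - ε)) ≤ 1 := by
        have : (lam N * T N) * ((1 - ε) * (1 - ε)) * szV N ≤ 1 * szV N := by linarith
        exact le_of_mul_le_mul_right this hV
      by_contra hc
      push Not at hc
      have : b * ((1 - ε) * (1 - ε)) ≤ (lam N * T N) * ((1 - ε) * (1 - ε)) :=
        mul_le_mul_of_nonneg_right hc (mul_self_nonneg _)
      linarith
  have hc := szc_pos
  have h4 := (h3.div szT_lim (by positivity)).div_const ((2:ℝ) ^ ((7:ℝ)/2) * π ^ ((3:ℝ)/2) * Real.exp 1)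
  have e : 1 / (szc * Real.exp (-1) / 2) / ((2:ℝ) ^ ((7:ℝ)/2) * π ^ ((3:ℝ)/2) * Real.exp 1) = 1 := by
    rw [szc, Real.mul_rpow (by norm_num) Real.pi_pos.le, show (7:ℝ)/2 = 2 + 3/2 by norm_num,
      Real.rpow_add (by norm_num), Real.exp_neg]
    have : (0:ℝ) < π ^ ((3:ℝ)/2) := by positivity
    have : (0:ℝ) < 2 ^ ((3:ℝ)/2) := by positivity
    field_simp
    norm_num
  rw [e] at h4
  refine h4.congr' ?_
  filter_upwards [eventually_gt_atTop 0] with N hN0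
  have hN' : (0:ℝ) < N := by exact_mod_cast hN0
  have e1 : (N:ℝ) ^ ((1:ℝ)/4) * Real.exp (-4 * √(N:ℝ)) = (szM N)⁻¹ := by
    rw [szM, neg_div, Real.rpow_neg hN'.le, neg_mul, Real.exp_neg, mul_inv, inv_inv]
  have hM := szM_pos hN0
  have hTN := hTpos N
  rw [mul_assoc _ ((N:ℝ) ^ ((1:ℝ)/4)), e1]
  simp only [Pi.div_apply]
  change lam N * T N / (T N / szM N) / _ = _
  field_simp
end

section
/- Fix β with 0 < β < 1/2 and let λ_N be as in the context. Then there exists a constant c > 0 such that λ_N ≥ c for all N ∈ ℕ; that is, the smallest eigenvalue of the infinite Hankel matrix associated with the weight exp(−x^β) is bounded below by a positive constant. -/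
open MeasureTheory Real Filter Topology

lemma half_plane_zero (h : ℂ → ℂ) (hc : ContinuousOn h {t | 0 ≤ t.im})
    (hd : DifferentiableOn ℂ h {t | 0 < t.im}) (C R0 : ℝ)
    (hb : ∀ t : ℂ, 0 ≤ t.im → R0 ≤ ‖t‖ → ‖h t‖ ≤ C / ‖t‖ ^ 2)
    (hint : Integrable (fun x : ℝ => h x)) : ∫ x : ℝ, h x = 0 := by
  have hlim := intervalIntegral_tendsto_integral (μ := volume) hint tendsto_neg_atTop_atBot tendsto_id
  refine tendsto_nhds_unique hlim ?_
  have hC : Tendsto (fun R : ℝ => 4 * |C| / R) atTop (𝓝 0) := tendsto_const_nhds.div_atTop tendsto_id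
  refine squeeze_zero_norm' ?_ hC
  filter_upwards [eventually_ge_atTop R0, eventually_gt_atTop 0] with R hR0 hR
  have key := Complex.integral_boundary_rect_eq_zero_of_continuousOn_of_differentiableOn h
    (-R : ℝ) (R + R * Complex.I) (hc.mono ?_) (hd.mono ?_)
  · simp only [Complex.ofReal_re, Complex.ofReal_im, Complex.add_re, Complex.mul_re, Complex.I_re,
      Complex.I_im, Complex.add_im, Complex.mul_im, mul_zero, mul_one, zero_add, add_zero, sub_zero,
      Complex.ofReal_zero, zero_mul, smul_eq_mul] at key
    have hbd : ∀ t : ℂ, 0 ≤ t.im → R ≤ ‖t‖ → ‖h t‖ ≤ |C| / R ^ 2 := by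
      intro t ht htR
      refine (hb t ht (hR0.trans htR)).trans ?_
      have : C ≤ |C| := le_abs_self C
      gcongr
    have b1 : ‖∫ x : ℝ in (-R)..R, h (x + R * Complex.I)‖ ≤ |C| / R ^ 2 * |R - (-R)| := by
      refine intervalIntegral.norm_integral_le_of_norm_le_const fun x _ => hbd _ ?_ ?_
      · simp [hR.le]
      · refine le_trans ?_ (Complex.abs_im_le_norm _)
        simp [le_abs_self]
    have b2 : ‖∫ x : ℝ in (0)..R, h (R + x * Complex.I)‖ ≤ |C| / R ^ 2 * |R - 0| := by
      refine intervalIntegral.norm_integral_le_of_norm_le_const fun x hx => hbd _ ?_ ?_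
      · rw [Set.uIoc_of_le hR.le] at hx; simp [hx.1.le]
      · refine le_trans ?_ (Complex.abs_re_le_norm _)
        simp [le_abs_self]
    have b3 : ‖∫ x : ℝ in (0)..R, h ((-R : ℝ) + x * Complex.I)‖ ≤ |C| / R ^ 2 * |R - 0| := by
      refine intervalIntegral.norm_integral_le_of_norm_le_const fun x hx => hbd _ ?_ ?_
      · rw [Set.uIoc_of_le hR.le] at hx; simp [hx.1.le]
      · refine le_trans ?_ (Complex.abs_re_le_norm _)
        simp [le_abs_self]
    have e : (∫ x : ℝ in (-R)..R, h x) = (∫ x : ℝ in (-R)..R, h (x + R * Complex.I))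
       - Complex.I * (∫ x : ℝ in (0)..R, h (R + x * Complex.I))
       + Complex.I * (∫ x : ℝ in (0)..R, h ((-R : ℝ) + x * Complex.I)) := by
      linear_combination key
    simp only [id]
    rw [e]
    refine (norm_add_le _ _).trans ?_
    refine (add_le_add_left (norm_sub_le _ _) _).trans ?_
    rw [norm_mul, norm_mul, Complex.norm_I, one_mul, one_mul]
    rw [sub_neg_eq_add, abs_of_pos (a := R + R) (by linarith)] at b1
    rw [sub_zero, abs_of_pos hR] at b2 b3
    calc _ ≤ |C| / R ^ 2 * (R + R) + |C| / R ^ 2 * R + |C| / R ^ 2 * R := by gcongr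
      _ = 4 * |C| / R := by field_simp; ring
  · intro t ht
    have := ht.2
    simp [hR.le, Set.uIcc_of_le] at this
    exact this.1
  · intro t ht
    have := ht.2
    simp [hR.le] at this
    exact this.1

lemma kernel_int (a b : ℝ) (hb : 0 < b) :
    Integrable (fun t : ℝ => ((t - a) ^ 2 + b ^ 2)⁻¹) ∧
    ∫ t : ℝ, ((t - a) ^ 2 + b ^ 2)⁻¹ = π / b := by
  have e : (fun t : ℝ => ((t - a) ^ 2 + b ^ 2)⁻¹) =
      fun t => (fun s : ℝ => (fun u : ℝ => (b ^ 2)⁻¹ * (1 + u ^ 2)⁻¹) (s / b)) (t - a) := by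
    funext t
    simp only
    field_simp
    ring
  rw [e]
  constructor
  · exact (((integrable_inv_one_add_sq.const_mul _).comp_div hb.ne').comp_sub_right a)
  · rw [integral_sub_right_eq_self (fun s : ℝ => (fun u : ℝ => (b ^ 2)⁻¹ * (1 + u ^ 2)⁻¹) (s / b)) a,
      Measure.integral_comp_div (fun u : ℝ => (b ^ 2)⁻¹ * (1 + u ^ 2)⁻¹), integral_const_mul,
      integral_univ_inv_one_add_sq, abs_of_pos hb, smul_eq_mul]
    field_simp

lemma poisson_bound (G : ℂ → ℂ) (hc : ContinuousOn G {t | 0 ≤ t.im})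
    (hd : DifferentiableOn ℂ G {t | 0 < t.im}) (K : ℝ)
    (hK : ∀ t : ℂ, 0 ≤ t.im → ‖G t‖ ≤ K) (ζ : ℂ) (hζ : 0 < ζ.im) :
    ‖G ζ‖ * (π / ζ.im) ≤ ∫ t : ℝ, ‖G t‖ * ((t - ζ.re) ^ 2 + ζ.im ^ 2)⁻¹ := by
  obtain ⟨ki, kv⟩ := kernel_int ζ.re ζ.im hζ
  have hop : IsOpen {t : ℂ | 0 < t.im} := isOpen_lt continuous_const Complex.continuous_im
  have hn : {t : ℂ | 0 < t.im} ∈ 𝓝 ζ := hop.mem_nhds hζ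
  have hn' : {t : ℂ | 0 ≤ t.im} ∈ 𝓝 ζ := mem_of_superset hn fun t (ht : 0 < t.im) => ht.le
  have hne : ∀ t : ℂ, 0 ≤ t.im → t - (starRingEnd ℂ) ζ ≠ 0 := by
    intro t ht h0
    have := congrArg Complex.im h0
    simp at this
    linarith
  set h : ℂ → ℂ := fun t => dslope G ζ t / (t - (starRingEnd ℂ) ζ) with hh
  have hK0 : 0 ≤ K := (norm_nonneg _).trans (hK ζ hζ.le)
  have hreal : ∀ t : ℝ, h t = (G t - G ζ) * ((((t - ζ.re) ^ 2 + ζ.im ^ 2)⁻¹ : ℝ) : ℂ) := by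
    intro t
    have h1 : (t : ℂ) ≠ ζ := by
      intro h0; rw [← h0] at hζ; simp at hζ
    simp only [hh]
    rw [dslope_of_ne _ h1, slope_def_field, div_div, div_eq_mul_inv]
    congr 1
    rw [Complex.ofReal_inv]
    congr 1
    have e1 : ((t : ℂ) - ζ) * (t - (starRingEnd ℂ) ζ) =
        t ^ 2 - t * (ζ + (starRingEnd ℂ) ζ) + ζ * (starRingEnd ℂ) ζ := by ring
    rw [e1, Complex.add_conj, Complex.mul_conj, Complex.normSq_apply]
    push_cast
    ring
  have hGm : AEStronglyMeasurable (fun t : ℝ => G t) volume := by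
    apply Continuous.aestronglyMeasurable
    exact hc.comp_continuous Complex.continuous_ofReal (by simp)
  have i1 : Integrable (fun t : ℝ => G t * ((((t - ζ.re) ^ 2 + ζ.im ^ 2)⁻¹ : ℝ) : ℂ)) :=
    ki.ofReal.bdd_mul hGm (c := K) (Eventually.of_forall fun t => hK _ (by simp))
  have i2 : Integrable (fun t : ℝ => G ζ * ((((t - ζ.re) ^ 2 + ζ.im ^ 2)⁻¹ : ℝ) : ℂ)) :=
    ki.ofReal.const_mul _
  have hfun : (fun t : ℝ => h t) = fun t : ℝ => G t * ((((t - ζ.re) ^ 2 + ζ.im ^ 2)⁻¹ : ℝ) : ℂ)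
      - G ζ * ((((t - ζ.re) ^ 2 + ζ.im ^ 2)⁻¹ : ℝ) : ℂ) := by
    funext t; rw [hreal]; ring
  have hz : ∫ t : ℝ, h t = 0 := by
    refine half_plane_zero h ?_ ?_ (8 * K) (2 * ‖ζ‖) ?_ ?_
    · exact ((continuousOn_dslope hn').2 ⟨hc, hd.differentiableAt hn⟩).div (by fun_prop) hne
    · exact ((Complex.differentiableOn_dslope hn).2 hd).div (by fun_prop)
        (fun t ht => hne t (le_of_lt ht))
    · intro t ht hR
      have hζp : 0 < ‖ζ‖ := norm_pos_iff.2 (by rintro rfl; simp at hζ)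
      have htζ : t ≠ ζ := by rintro rfl; linarith
      have n1 : ‖t‖ / 2 ≤ ‖t - ζ‖ := by
        have := norm_sub_norm_le t ζ; linarith
      have n2 : ‖t‖ / 2 ≤ ‖t - (starRingEnd ℂ) ζ‖ := by
        have := norm_sub_norm_le t ((starRingEnd ℂ) ζ)
        rw [RCLike.norm_conj] at this; linarith
      have htp : 0 < ‖t‖ := by linarith
      simp only [hh]
      rw [dslope_of_ne _ htζ, slope_def_field, div_div, norm_div, norm_mul]
      have n3 : ‖G t - G ζ‖ ≤ 2 * K := by
        have := norm_sub_le (G t) (G ζ)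
        have := hK t ht
        have := hK ζ hζ.le
        linarith
      calc _ ≤ 2 * K / ((‖t‖ / 2) * (‖t‖ / 2)) := by gcongr
        _ = _ := by field_simp; ring
    · rw [hfun]; exact i1.sub i2
  rw [hfun, integral_sub i1 i2, integral_const_mul, integral_complex_ofReal, kv, sub_eq_zero] at hz
  have : ‖G ζ‖ * (π / ζ.im) = ‖G ζ * ((π / ζ.im : ℝ) : ℂ)‖ := by
    rw [norm_mul, Complex.norm_real, Real.norm_of_nonneg (by positivity)]
  rw [this, ← hz]
  refine (norm_integral_le_integral_norm _).trans (le_of_eq ?_)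
  congr 1
  funext t
  rw [norm_mul, Complex.norm_real, Real.norm_of_nonneg (by positivity)]

lemma pow_exp_bdd (α a : ℝ) (hα : 0 < α) (ha : 0 < a) (n : ℕ) :
    ∃ K : ℝ, ∀ r : ℝ, 0 ≤ r → r ^ n * exp (-(a * r ^ α)) ≤ K := by
  obtain ⟨m, hm⟩ := exists_nat_ge ((n : ℝ) / α)
  refine ⟨1 + m.factorial / a ^ m, fun r hr => ?_⟩
  have hra : 0 ≤ a * r ^ α := by positivity
  have h1 : 0 ≤ (m.factorial : ℝ) / a ^ m := by positivity
  rcases le_total r 1 with h | h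
  · have : r ^ n * exp (-(a * r ^ α)) ≤ 1 * 1 := by
      gcongr
      · exact pow_le_one₀ hr h
      · exact Real.exp_le_one_iff.2 (by linarith)
    linarith
  · have h2 : r ^ n ≤ (r ^ α) ^ m := by
      rw [← Real.rpow_natCast, ← Real.rpow_natCast, ← Real.rpow_mul hr]
      apply Real.rpow_le_rpow_of_exponent_le h
      rw [div_le_iff₀ hα] at hm
      linarith
    have h3 := Real.pow_div_factorial_le_exp (a * r ^ α) hra m
    have h4 : (r ^ α) ^ m ≤ m.factorial / a ^ m * exp (a * r ^ α) := by
      rw [mul_pow, div_le_iff₀ (by positivity)] at h3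
      rw [div_mul_eq_mul_div, le_div_iff₀ (by positivity)]
      linarith
    have : r ^ n * exp (-(a * r ^ α)) ≤ m.factorial / a ^ m := by
      rw [Real.exp_neg, ← div_eq_mul_inv, div_le_iff₀ (Real.exp_pos _)]
      exact h2.trans h4
    linarith

lemma poly_exp_bdd (α a : ℝ) (hα : 0 < α) (ha : 0 < a) (P : Polynomial ℂ) :
    ∃ K : ℝ, ∀ t : ℂ, ‖P.eval t‖ * exp (-(a * ‖t‖ ^ α)) ≤ K := by
  induction P using Polynomial.induction_on' with
  | add p q hp hq =>
    obtain ⟨K1, h1⟩ := hp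
    obtain ⟨K2, h2⟩ := hq
    refine ⟨K1 + K2, fun t => ?_⟩
    rw [Polynomial.eval_add]
    calc _ ≤ (‖p.eval t‖ + ‖q.eval t‖) * exp (-(a * ‖t‖ ^ α)) := by
            gcongr; exact norm_add_le _ _
      _ ≤ _ := by rw [add_mul]; exact add_le_add (h1 t) (h2 t)
  | monomial n c =>
    obtain ⟨K, hK⟩ := pow_exp_bdd α a hα ha n
    refine ⟨‖c‖ * K, fun t => ?_⟩
    rw [Polynomial.eval_monomial, norm_mul, norm_pow, mul_assoc]
    exact mul_le_mul_of_nonneg_left (hK _ (norm_nonneg _)) (norm_nonneg _)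

/-- outer function -/
noncomputable def outerE (α : ℝ) (t : ℂ) : ℂ :=
  Complex.exp (-(((1 / (2 * Real.cos (π * α / 2)) : ℝ) : ℂ) * (-Complex.I * t) ^ (α : ℂ)))

lemma cos_pos_aux {α : ℝ} (h0 : 0 < α) (h1 : α < 1) : 0 < Real.cos (π * α / 2) := by
  apply Real.cos_pos_of_mem_Ioo
  have := Real.pi_pos
  constructor <;> nlinarith

lemma outerE_norm (α : ℝ) (t : ℂ) : ‖outerE α t‖ =
    exp (-((1 / (2 * Real.cos (π * α / 2))) *
      (‖t‖ ^ α * Real.cos (Complex.arg (-Complex.I * t) * α)))) := by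
  rw [outerE, Complex.norm_exp, Complex.neg_re, Complex.re_ofReal_mul, Complex.cpow_ofReal_re]
  simp

lemma outerE_le {α : ℝ} (h0 : 0 < α) (h1 : α < 1) (t : ℂ) (ht : 0 ≤ t.im) :
    ‖outerE α t‖ ≤ exp (-(1 / 2 * ‖t‖ ^ α)) := by
  have hc := cos_pos_aux h0 h1
  rw [outerE_norm, Real.exp_le_exp, neg_le_neg_iff]
  have harg : |Complex.arg (-Complex.I * t)| ≤ π / 2 := by
    rw [Complex.abs_arg_le_pi_div_two_iff]; simpa using ht
  have hcos : Real.cos (π * α / 2) ≤ Real.cos (Complex.arg (-Complex.I * t) * α) := by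
    rw [← Real.cos_abs (Complex.arg (-Complex.I * t) * α)]
    have := Real.pi_pos
    apply Real.cos_le_cos_of_nonneg_of_le_pi (abs_nonneg _)
    · nlinarith
    · rw [abs_mul, abs_of_pos h0]; nlinarith
  have hn : 0 ≤ ‖t‖ ^ α := by positivity
  calc 1 / 2 * ‖t‖ ^ α = (1 / (2 * Real.cos (π * α / 2))) * (‖t‖ ^ α * Real.cos (π * α / 2)) := by
        field_simp
    _ ≤ _ := by gcongr

lemma le_outerE {α : ℝ} (h0 : 0 < α) (h1 : α < 1) (t : ℂ) :
    exp (-((1 / (2 * Real.cos (π * α / 2))) * ‖t‖ ^ α)) ≤ ‖outerE α t‖ := by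
  have hc := cos_pos_aux h0 h1
  rw [outerE_norm, Real.exp_le_exp, neg_le_neg_iff]
  have hn : 0 ≤ ‖t‖ ^ α := by positivity
  gcongr
  exact mul_le_of_le_one_right hn (Real.cos_le_one _)

lemma outerE_cont {α : ℝ} (h0 : 0 < α) : ContinuousOn (outerE α) {t | 0 ≤ t.im} := by
  intro t ht
  apply ContinuousAt.continuousWithinAt
  unfold outerE
  have h : ContinuousAt (fun x : ℂ => x ^ (α : ℂ)) (-Complex.I * t) :=
    Complex.continuousAt_cpow_const_of_re_pos (Or.inl (by simpa using ht)) (by simpa using h0)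
  have h2 : ContinuousAt (fun t : ℂ => (-Complex.I * t) ^ (α : ℂ)) t :=
    ContinuousAt.comp (f := fun t : ℂ => -Complex.I * t) h (by fun_prop)
  fun_prop

lemma outerE_diff {α : ℝ} : DifferentiableOn ℂ (outerE α) {t | 0 < t.im} := by
  intro t ht
  apply DifferentiableAt.differentiableWithinAt
  unfold outerE
  have h2 : DifferentiableAt ℂ (fun t : ℂ => (-Complex.I * t) ^ (α : ℂ)) t := by
    apply DifferentiableAt.cpow_const (by fun_prop)
    left; simpa using ht
  fun_prop

lemma cov (β : ℝ) (P : Polynomial ℂ) :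
    ∫ t : ℝ, |t| * ‖P.eval ((t : ℂ) ^ 2)‖ ^ 2 * exp (-(|t| ^ (2 * β))) =
    ∫ x in Set.Ioi (0 : ℝ), ‖P.eval (x : ℂ)‖ ^ 2 * exp (-(x ^ β)) := by
  have e : ∀ t : ℝ, |t| * ‖P.eval ((t : ℂ) ^ 2)‖ ^ 2 * exp (-(|t| ^ (2 * β))) =
    (fun s : ℝ => s * ‖P.eval ((s : ℂ) ^ 2)‖ ^ 2 * exp (-(s ^ (2 * β)))) |t| := by
    intro t
    simp only
    rw [← Complex.ofReal_pow, ← Complex.ofReal_pow, sq_abs]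
  simp_rw [e]
  rw [integral_comp_abs (f := fun s : ℝ => s * ‖P.eval ((s : ℂ) ^ 2)‖ ^ 2 * exp (-(s ^ (2 * β)))),
    ← integral_comp_rpow_Ioi_of_pos
      (g := fun x : ℝ => ‖P.eval (x : ℂ)‖ ^ 2 * exp (-(x ^ β))) (p := 2) two_pos, ← integral_const_mul]
  refine setIntegral_congr_fun measurableSet_Ioi fun s hs => ?_
  have hs : 0 < s := hs
  simp only [smul_eq_mul]
  rw [← Real.rpow_mul hs.le]
  norm_num
  ring

lemma kernel_ineq (a b t : ℝ) (hb : 0 < b) (h : a ^ 2 + b ^ 2 = 2) :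
    ((t - a) ^ 2 + b ^ 2)⁻¹ ≤ 4 / b ^ 2 * (1 + t ^ 2)⁻¹ := by
  rw [← div_eq_mul_inv, div_div, inv_eq_one_div, div_le_div_iff₀ (by positivity) (by positivity)]
  have e : (t - a) ^ 2 + b ^ 2 = t ^ 2 - 2 * a * t + 2 := by nlinarith
  have hb2 : b ^ 2 = 2 - a ^ 2 := by linarith
  have ha : a ^ 2 ≤ 2 := by nlinarith
  rw [e, hb2]
  nlinarith [sq_nonneg (t - a), sq_nonneg (a * t - 2), sq_nonneg (a * t - 1), sq_nonneg (t - 2 * a), sq_nonneg (a*t), mul_nonneg (sub_nonneg.2 ha) (sq_nonneg t)]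

lemma main_point (β : ℝ) (hβ0 : 0 < β) (hβ : β < 1/2) (P : Polynomial ℂ)
    (hP : ∫ x in Set.Ioi (0 : ℝ), ‖P.eval (x : ℂ)‖ ^ 2 * exp (-(x ^ β)) ≤ 1)
    (ζ : ℂ) (hζ : 0 < ζ.im) (hn : ‖ζ‖ ^ 2 = 2) :
    ‖ζ * P.eval (ζ ^ 2) * outerE (2 * β) ζ‖ ≤ 4 / ζ.im := by
  have h0 : 0 < 2 * β := by linarith
  have h1 : 2 * β < 1 := by linarith
  set G : ℂ → ℂ := fun t => t * P.eval (t ^ 2) * outerE (2 * β) t with hG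
  have hGle : ∀ t : ℂ, 0 ≤ t.im →
      ‖G t‖ ≤ ‖t * P.eval (t ^ 2)‖ * exp (-(1 / 2 * ‖t‖ ^ (2 * β))) := by
    intro t ht
    simp only [hG]
    rw [norm_mul]
    gcongr
    exact outerE_le h0 h1 t ht
  obtain ⟨K, hK⟩ := poly_exp_bdd (2 * β) (1 / 2) h0 (by norm_num)
    (Polynomial.X * P.comp (Polynomial.X ^ 2))
  obtain ⟨K', hK'⟩ := poly_exp_bdd (2 * β) 1 h0 (by norm_num)
    ((1 + Polynomial.X ^ 2) * (Polynomial.X * P.comp (Polynomial.X ^ 2) ^ 2))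
  simp only [Polynomial.eval_mul, Polynomial.eval_X, Polynomial.eval_comp, Polynomial.eval_pow,
    Polynomial.eval_add, Polynomial.eval_one, one_mul] at hK hK'
  have hGc : ContinuousOn G {t | 0 ≤ t.im} := by
    have := outerE_cont h0
    simp only [hG]
    have h2 : Continuous fun t : ℂ => t * P.eval (t ^ 2) := by fun_prop
    exact h2.continuousOn.mul this
  have hGd : DifferentiableOn ℂ G {t | 0 < t.im} := by
    have h2 : Differentiable ℂ fun t : ℂ => t * P.eval (t ^ 2) := 
      differentiable_id.mul (P.differentiable.comp (differentiable_id.pow 2))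
    exact h2.differentiableOn.mul outerE_diff
  have hpb := poisson_bound G hGc hGd K (fun t ht => (hGle t ht).trans (hK t)) ζ hζ
  set W : ℝ → ℝ := fun t => |t| * ‖P.eval ((t : ℂ) ^ 2)‖ ^ 2 * exp (-(|t| ^ (2 * β))) with hW
  have hWc : Continuous W := by
    have : Continuous fun t : ℝ => |t| ^ (2 * β) :=
      continuous_abs.rpow_const fun _ => Or.inr h0.le
    simp only [hW]
    fun_prop
  have hWi : Integrable W := by
    refine (integrable_inv_one_add_sq.const_mul K').mono' hWc.aestronglyMeasurable
      (Eventually.of_forall fun t => ?_)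
    have h2 := hK' t
    have h3 : ‖(1 + (t : ℂ) ^ 2)‖ = 1 + t ^ 2 := by
      rw [← Complex.ofReal_pow, ← Complex.ofReal_one, ← Complex.ofReal_add, Complex.norm_real,
        Real.norm_of_nonneg (by positivity)]
    rw [norm_mul, norm_mul, norm_pow, h3, Complex.norm_real, Real.norm_eq_abs] at h2
    rw [Real.norm_of_nonneg (by simp only [hW]; positivity), ← div_eq_mul_inv,
      le_div_iff₀ (by positivity)]
    simp only [hW]
    linarith
  have hWv : ∫ t, W t ≤ 1 := by
    simp only [hW]; rw [cov]; exact hP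
  have hpt : ∀ t : ℝ, ‖G t‖ * ((t - ζ.re) ^ 2 + ζ.im ^ 2)⁻¹ ≤
      2 / ζ.im ^ 2 * (W t + (1 + t ^ 2)⁻¹) := by
    intro t
    have k1 := kernel_ineq ζ.re ζ.im t hζ (by
      rw [← hn, Complex.sq_norm, Complex.normSq_apply]; ring)
    have k2 : ‖G t‖ * (1 + t ^ 2)⁻¹ ≤ (W t + (1 + t ^ 2)⁻¹) / 2 := by
      have g1 := hGle t (by simp)
      rw [norm_mul (t : ℂ) (P.eval ((t : ℂ) ^ 2)), Complex.norm_real, Real.norm_eq_abs] at g1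
      set q := ‖P.eval ((t : ℂ) ^ 2)‖
      set e := exp (-(1 / 2 * |t| ^ (2 * β))) with he
      have e2 : exp (-(|t| ^ (2 * β))) = e ^ 2 := by
        rw [he, sq, ← Real.exp_add]; congr 1; ring
      have w : W t = |t| * (q * e) ^ 2 := by simp only [hW, e2]; ring
      have a0 := abs_nonneg t
      have i0 : 0 < (1 + t ^ 2)⁻¹ := by positivity
      have i1 : |t| * (1 + t ^ 2)⁻¹ ≤ 1 := by
        rw [← div_eq_mul_inv, div_le_one (by positivity), ← sq_abs]
        nlinarith
      set κ := (1 + t ^ 2)⁻¹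
      rw [w]
      have : ‖G t‖ * κ ≤ |t| * q * e * κ := by gcongr
      have j1 : 0 ≤ |t| * (q * e - κ) ^ 2 := by positivity
      have j2 : |t| * κ * κ ≤ 1 * κ := by gcongr
      nlinarith
    calc _ ≤ ‖G t‖ * (4 / ζ.im ^ 2 * (1 + t ^ 2)⁻¹) := by gcongr
      _ = 4 / ζ.im ^ 2 * (‖G t‖ * (1 + t ^ 2)⁻¹) := by ring
      _ ≤ 4 / ζ.im ^ 2 * ((W t + (1 + t ^ 2)⁻¹) / 2) := by gcongr
      _ = _ := by ring
  have hI : ∫ t : ℝ, ‖G t‖ * ((t - ζ.re) ^ 2 + ζ.im ^ 2)⁻¹ ≤ 2 / ζ.im ^ 2 * (1 + π) := by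
    refine (integral_mono_of_nonneg (Eventually.of_forall fun t => by positivity)
      ((hWi.add integrable_inv_one_add_sq).const_mul _) (Eventually.of_forall hpt)).trans ?_
    rw [integral_const_mul, integral_add' hWi integrable_inv_one_add_sq,
      integral_univ_inv_one_add_sq]
    gcongr
  have hfin := hpb.trans hI
  have hpi := Real.pi_gt_three
  rw [← mul_div_assoc, div_le_iff₀ hζ] at hfin
  have h5 : 2 / ζ.im ^ 2 * (1 + π) * ζ.im = 2 * (1 + π) / ζ.im := by field_simp
  rw [h5] at hfin
  have h6 : 2 * (1 + π) / ζ.im ≤ 4 / ζ.im * π := by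
    rw [div_mul_eq_mul_div]; exact div_le_div_of_nonneg_right (by linarith) hζ.le
  exact le_of_mul_le_mul_right (hfin.trans h6) Real.pi_pos

lemma circle_bound (β : ℝ) (hβ0 : 0 < β) (hβ : β < 1/2) (P : Polynomial ℂ)
    (hP : ∫ x in Set.Ioi (0 : ℝ), ‖P.eval (x : ℂ)‖ ^ 2 * exp (-(x ^ β)) ≤ 1)
    (z : ℂ) (hz : ‖z‖ = 2) :
    ‖P.eval z * (z ^ 2 - 4)‖ ≤
      32 / exp (-((1 / (2 * Real.cos (π * (2 * β) / 2))) * 2 ^ β)) := by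
  set E0 := exp (-((1 / (2 * Real.cos (π * (2 * β) / 2))) * 2 ^ β)) with hE0
  have hE0p : 0 < E0 := Real.exp_pos _
  have h4 : z ^ 2 - 4 = z * (z - (starRingEnd ℂ) z) := by
    have : z * (starRingEnd ℂ) z = 4 := by
      rw [Complex.mul_conj, Complex.normSq_eq_norm_sq, hz]; norm_num
    linear_combination this
  have h5 : ‖z ^ 2 - 4‖ = 4 * |z.im| := by
    rw [h4, norm_mul, hz, Complex.sub_conj, norm_mul, Complex.norm_I, Complex.norm_real]
    simp; ring
  rw [norm_mul, h5]
  by_cases him : z.im = 0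
  · rw [him]; simp; positivity
  have hex : ∃ ζ : ℂ, ζ ^ 2 = z ∧ 0 < ζ.im := by
    obtain ⟨w, hw⟩ := IsAlgClosed.exists_pow_nat_eq z (n := 2) (by norm_num)
    rcases lt_trichotomy w.im 0 with h | h | h
    · exact ⟨-w, by rw [neg_sq, hw], by simpa using h⟩
    · exfalso; apply him; rw [← hw, sq, Complex.mul_im, h]; ring
    · exact ⟨w, hw, h⟩
  obtain ⟨ζ, rfl, hζ⟩ := hex
  rw [norm_pow] at hz
  have hm := main_point β hβ0 hβ P hP ζ hζ hz
  have hE := le_outerE (α := 2 * β) (by linarith) (by linarith) ζ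
  have hp : ‖ζ‖ ^ (2 * β) = 2 ^ β := by
    rw [Real.rpow_mul (norm_nonneg _), Real.rpow_two, hz]
  rw [hp, ← hE0] at hE
  rw [norm_mul, norm_mul] at hm
  have him2 : |(ζ ^ 2).im| ≤ 2 * (‖ζ‖ * ζ.im) := by
    have : (ζ ^ 2).im = 2 * (ζ.re * ζ.im) := by rw [sq, Complex.mul_im]; ring
    rw [this, abs_mul, abs_mul, abs_of_pos hζ, abs_two]
    gcongr
    exact Complex.abs_re_le_norm ζ
  have hle : ‖ζ‖ * ‖P.eval (ζ ^ 2)‖ * E0 * ζ.im ≤ 4 := by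
    rw [← le_div_iff₀ hζ]
    refine le_trans ?_ hm
    gcongr
  rw [le_div_iff₀ hE0p]
  calc _ ≤ ‖P.eval (ζ ^ 2)‖ * (4 * (2 * (‖ζ‖ * ζ.im))) * E0 := by gcongr
    _ = 8 * (‖ζ‖ * ‖P.eval (ζ ^ 2)‖ * E0 * ζ.im) := by ring
    _ ≤ 32 := by linarith

lemma coeff_bound (P : Polynomial ℂ) (B : ℝ) (hB : 0 ≤ B)
    (h : ∀ z : ℂ, ‖z‖ = 2 → ‖P.eval z * (z ^ 2 - 4)‖ ≤ B) :
    ∑ i ∈ P.support, ‖P.coeff i‖ ^ 2 ≤ B ^ 2 := by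
  have h1 : ∀ z : ℂ, ‖z‖ = 1 → ‖P.eval z‖ ≤ B := by
    intro z hz
    have hd : Differentiable ℂ fun z : ℂ => P.eval z * (z ^ 2 - 4) :=
      P.differentiable.mul ((differentiable_id.pow 2).sub_const 4)
    have := Complex.norm_le_of_forall_mem_frontier_norm_le (U := Metric.ball (0 : ℂ) 2)
      (f := fun z : ℂ => P.eval z * (z ^ 2 - 4)) Metric.isBounded_ball hd.diffContOnCl (C := B)
      (by
        intro w hw
        rw [frontier_ball _ (by norm_num)] at hw
        exact h w (by simpa using hw)) (z := z) (subset_closure (by simp [hz]))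
    simp only [norm_mul] at this
    have h3 : 1 ≤ ‖z ^ 2 - 4‖ := by
      have := norm_sub_norm_le (4 : ℂ) (z ^ 2)
      rw [norm_sub_rev, norm_pow, hz] at this
      norm_num at this
      linarith
    nlinarith [norm_nonneg (P.eval z)]
  rw [P.sum_sq_norm_coeff_eq_circleAverage]
  refine Real.circleAverage_mono_on_of_le_circle ?_ ?_
  · apply ContinuousOn.circleIntegrable (by norm_num)
    fun_prop
  · intro z hz
    have := h1 z (by simpa using hz)
    gcongr

lemma moment_integrable (β : ℝ) (hβ0 : 0 < β) (k : ℕ) :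
    IntegrableOn (fun x : ℝ => x ^ k * exp (-(x ^ β))) (Set.Ioi 0) := by
  have h := integral_rpow_mul_exp_neg_rpow (p := β) (q := k) hβ0 (by
    have : (0 : ℝ) ≤ k := by positivity
    linarith)
  simp only [Real.rpow_natCast] at h
  by_contra hc
  rw [integral_undef hc] at h
  have : 0 < 1 / β * Real.Gamma ((k + 1) / β) :=
    mul_pos (by positivity) (Real.Gamma_pos_of_pos (by positivity))
  linarith

lemma quad_bound (β : ℝ) (hβ0 : 0 < β) (hβ : β < 1/2) : ∃ D : ℝ, 0 < D ∧
    ∀ (N : ℕ) (v : Fin (N + 1) → ℝ),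
    ∑ j, ∑ k, v j * v k * ∫ x in Set.Ioi (0:ℝ), x ^ ((j : ℕ) + (k : ℕ)) * Real.exp (-(x ^ β)) ≤ 1 →
    ∑ j, v j ^ 2 ≤ D := by
  refine ⟨(32 / exp (-((1 / (2 * Real.cos (π * (2 * β) / 2))) * 2 ^ β))) ^ 2, by positivity, ?_⟩
  intro N v hv
  set P : Polynomial ℂ := ∑ j : Fin (N + 1), Polynomial.monomial (j : ℕ) (v j : ℂ) with hP
  have hcoeff : ∀ j : Fin (N + 1), P.coeff j = v j := by
    intro j
    simp [hP, Polynomial.coeff_monomial, Fin.val_inj]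
  have heval : ∀ x : ℝ, ‖P.eval (x : ℂ)‖ ^ 2 = ∑ j, ∑ k, v j * v k * x ^ ((j : ℕ) + (k : ℕ)) := by
    intro x
    have : P.eval (x : ℂ) = ((∑ j : Fin (N + 1), v j * x ^ (j : ℕ) : ℝ) : ℂ) := by
      simp [hP, Polynomial.eval_finsetSum]
    rw [this, Complex.norm_real, Real.norm_eq_abs, sq_abs, sq, Finset.sum_mul_sum]
    refine Finset.sum_congr rfl fun j _ => Finset.sum_congr rfl fun k _ => ?_
    rw [pow_add]; ring
  have hint : ∫ x in Set.Ioi (0 : ℝ), ‖P.eval (x : ℂ)‖ ^ 2 * exp (-(x ^ β)) ≤ 1 := by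
    refine le_trans (le_of_eq ?_) hv
    simp_rw [heval, Finset.sum_mul, mul_assoc]
    rw [integral_finsetSum]
    · refine Finset.sum_congr rfl fun j _ => ?_
      rw [integral_finsetSum]
      · refine Finset.sum_congr rfl fun k _ => ?_
        rw [integral_const_mul, integral_const_mul]
      · intro k _
        exact ((moment_integrable β hβ0 _).const_mul _).const_mul _
    · intro j _
      refine integrable_finsetSum _ fun k _ => ?_
      exact ((moment_integrable β hβ0 _).const_mul _).const_mul _
  have hb := coeff_bound P _ (by positivity) (circle_bound β hβ0 hβ P hint)
  refine le_trans ?_ hb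
  have e : ∑ j, v j ^ 2 = ∑ i ∈ Finset.range (N + 1), ‖P.coeff i‖ ^ 2 := by
    rw [← Fin.sum_univ_eq_sum_range (fun i => ‖P.coeff i‖ ^ 2)]
    refine Finset.sum_congr rfl fun j _ => ?_
    rw [hcoeff, Complex.norm_real, Real.norm_eq_abs, sq_abs]
  rw [e, ← Finset.sum_filter_ne_zero]
  refine Finset.sum_le_sum_of_subset_of_nonneg ?_ fun _ _ _ => by positivity
  intro i hi
  simpa using (Finset.mem_filter.1 hi).2

/-- For the weight `exp(−x^β)` on `[0,∞)` with `0 < β < 1/2`,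
the smallest eigenvalues `lam N` of the Hankel matrices are bounded below by a
positive constant: the smallest eigenvalue of the infinite Hankel matrix is
positive. -/
theorem smallest_eigenvalue_bounded_below
    (β : ℝ) (hβ0 : 0 < β) (hβ : β < 1/2)
    (μ : ℕ → ℝ) (hμ : ∀ k, μ k = ∫ x in Set.Ioi (0:ℝ), x ^ k * Real.exp (-(x ^ β)))
    (H : (N : ℕ) → Matrix (Fin (N + 1)) (Fin (N + 1)) ℝ)
    (hH : ∀ N, ∀ j k : Fin (N + 1), H N j k = μ ((j : ℕ) + (k : ℕ)))
    (hpd : ∀ N, (H N).PosDef)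
    (lam : ℕ → ℝ)
    (hlam : ∀ N, IsLeast
      {x : ℝ | Module.End.HasEigenvalue (Matrix.toLin' (H N)) x} (lam N)) :
    ∃ c : ℝ, 0 < c ∧ ∀ N : ℕ, c ≤ lam N := by
  obtain ⟨D, hD, hq⟩ := quad_bound β hβ0 hβ
  refine ⟨1 / D, by positivity, fun N => ?_⟩
  obtain ⟨v, hv⟩ := Module.End.HasEigenvalue.exists_hasEigenvector (hlam N).1
  have hv0 : v ≠ 0 := hv.2
  have hHv : (H N).mulVec v = lam N • v := by
    have := hv.apply_eq_smul
    rwa [Matrix.toLin'_apply] at this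
  set S := ∑ j, v j ^ 2 with hS
  have hdot : v ⬝ᵥ (H N).mulVec v = lam N * S := by
    rw [hHv, dotProduct_smul, smul_eq_mul, hS]
    simp [dotProduct, sq]
  have hsum : v ⬝ᵥ (H N).mulVec v = ∑ j, ∑ k, v j * v k * μ ((j : ℕ) + (k : ℕ)) := by
    simp only [dotProduct, Matrix.mulVec, Finset.mul_sum, hH]
    refine Finset.sum_congr rfl fun j _ => Finset.sum_congr rfl fun k _ => by ring
  have hpos : 0 < v ⬝ᵥ (H N).mulVec v := by
    simpa using (hpd N).dotProduct_mulVec_pos hv0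
  have hSp : 0 ≤ S := Finset.sum_nonneg fun _ _ => sq_nonneg _
  set M := v ⬝ᵥ (H N).mulVec v with hM
  have hSpos : 0 < S := by
    rcases hSp.lt_or_eq with h | h
    · exact h
    · rw [← h, mul_zero] at hdot; linarith
  have hsq : (√M)⁻¹ ^ 2 = M⁻¹ := by rw [inv_pow, Real.sq_sqrt hpos.le]
  have := hq N (fun j => (√M)⁻¹ * v j) (by
    simp_rw [← hμ]
    have e : ∑ j : Fin (N + 1), ∑ k : Fin (N + 1), (√M)⁻¹ * v j * ((√M)⁻¹ * v k) * μ ((j : ℕ) + (k : ℕ))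
        = (√M)⁻¹ ^ 2 * M := by
      rw [hsum, Finset.mul_sum]
      refine Finset.sum_congr rfl fun j _ => ?_
      rw [Finset.mul_sum]
      refine Finset.sum_congr rfl fun k _ => by ring
    rw [e, hsq, inv_mul_cancel₀ hpos.ne'])
  simp_rw [mul_pow] at this
  rw [← Finset.mul_sum, hsq, ← hS, inv_mul_le_iff₀ hpos, hdot] at this
  rw [div_le_iff₀ hD]
  nlinarith
end
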